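/- arXiv:2512.17693 — 8 statements merged into one kernel-verified Lean document; each statement's English description precedes it below -/
import Mathlib

section
/- Let G = (V,E) be a finite simple graph with a dominating clique K of order |K| ≥ 4. If, for every vertex v ∈ V \ K, d(v) ≤ min_{u ∈ K} d(u), then G is antimagic. -/
open Finset

/-- A finite simple graph is *antimagic* if there is a bijective labelling of its edges
by `{1, 2, …, m}` (where `m` is the number of edges) such that the vertex sums
`σ(u) = ∑_{v : uv ∈ E} f(uv)` are pairwise distinct. -/
def IsAntimagic {V : Type*} [Fintype V] [DecidableEq V] (G : SimpleGraph V)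
    [DecidableRel G.Adj] : Prop :=
  ∃ f : Sym2 V → ℕ,
    Set.BijOn f ↑G.edgeFinset ↑(Finset.Icc 1 G.edgeFinset.card) ∧
    Function.Injective fun u : V => ∑ v ∈ G.neighborFinset u, f s(u, v)

theorem ext_lab {α : Type*} [DecidableEq α] (f : α → ℕ) (A B : Finset α) (hd : Disjoint A B)
    (hf : Set.BijOn f ↑A ↑(Finset.Icc 1 A.card)) (w : α → ℕ) :
    ∃ g : α → ℕ, (∀ x, x ∉ B → g x = f x) ∧
      Set.BijOn g ↑(A ∪ B) ↑(Finset.Icc 1 (A ∪ B).card) ∧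
      (∀ x ∈ B, A.card < g x) ∧ (∀ x ∈ B, ∀ y ∈ B, w x < w y → g x < g y) := by
  induction B using Finset.induction_on_max_value w with
  | empty => exact ⟨f, by simp, by simpa using hf, by simp, by simp⟩
  | insert a s has hmax ih =>
    rw [Finset.disjoint_insert_right] at hd
    obtain ⟨g, h1, h2, h3, h4⟩ := ih hd.2
    have haU : a ∉ A ∪ s := by simp [has, hd.1]
    have hA : A.card ≤ (A ∪ s).card := Finset.card_le_card Finset.subset_union_left
    have hub : ∀ x ∈ A ∪ s, 1 ≤ g x ∧ g x ≤ (A ∪ s).card := fun x hx => by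
      have := h2.mapsTo (Finset.mem_coe.2 hx)
      simpa using this
    have hne : ∀ x ∈ A ∪ s, x ≠ a := fun x hx h => haU (h ▸ hx)
    refine ⟨Function.update g a ((A ∪ s).card + 1), ?_, ?_, ?_, ?_⟩
    · intro x hx
      simp only [Finset.mem_insert, not_or] at hx
      rw [Function.update_of_ne hx.1, h1 x hx.2]
    · rw [Finset.union_insert, Finset.card_insert_of_notMem haU]
      have e : (Finset.Icc 1 ((A ∪ s).card + 1)) = insert ((A ∪ s).card + 1) (Finset.Icc 1 (A ∪ s).card) := by
        ext; simp; omega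
      rw [e, Finset.coe_insert, Finset.coe_insert]
      have h2' : Set.BijOn (Function.update g a ((A ∪ s).card + 1)) ↑(A ∪ s) ↑(Finset.Icc 1 (A ∪ s).card) := by
        refine h2.congr fun x hx => ?_
        rw [Function.update_of_ne (hne x hx)]
      have := h2'.insert (a := a) (by simp)
      simpa using this
    · intro x hx
      rcases Finset.mem_insert.1 hx with rfl | hx
      · simp; omega
      · rw [Function.update_of_ne (hne x (Finset.mem_union_right _ hx))]
        exact h3 x hx
    · intro x hx y hy hxy
      rcases Finset.mem_insert.1 hx with hx1 | hx1
      · subst hx1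
        rcases Finset.mem_insert.1 hy with hy1 | hy1
        · subst hy1
          omega
        · have := hmax y hy1
          omega
      · rw [Function.update_of_ne (hne x (Finset.mem_union_right _ hx1))]
        rcases Finset.mem_insert.1 hy with hy1 | hy1
        · subst hy1
          have := hub x (Finset.mem_union_right _ hx1)
          simp; omega
        · rw [Function.update_of_ne (hne y (Finset.mem_union_right _ hy1))]
          exact h4 x hx1 y hy1 hxy

theorem arith_aux (α β γ k a b : ℕ) (hk : 1 ≤ k) (hab : a ≤ b) (hβ : β ≤ k) (h : α + β ≤ γ + k) :
    α * a + β * b < γ * (a + 1) + k * (b + 1) := by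
  obtain ⟨t, rfl⟩ := Nat.exists_eq_add_of_le hβ
  have h1 : α ≤ γ + t := by omega
  have h2 : α * a ≤ (γ + t) * a := Nat.mul_le_mul_right _ h1
  have h3 : t * a ≤ t * b := Nat.mul_le_mul_left _ hab
  nlinarith

theorem sum_cmp {V : Type*} [Fintype V] [DecidableEq V]
    (G : SimpleGraph V) [DecidableRel G.Adj] (K : Finset V)
    (hclique : G.IsClique ↑K) (hcard : 4 ≤ K.card)
    (f : Sym2 V → ℕ) (a b : ℕ) (hab : a ≤ b)
    (hH : ∀ x y, x ∉ K → y ∉ K → G.Adj x y → f s(x, y) ≤ a)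
    (hX : ∀ x y, x ∉ K → y ∈ K → G.Adj x y → a < f s(x, y) ∧ f s(x, y) ≤ b)
    (hK : ∀ x y, x ∈ K → y ∈ K → G.Adj x y → b < f s(x, y))
    (v u : V) (hv : v ∉ K) (hu : u ∈ K) (hdeg : G.degree v ≤ G.degree u) :
    ∑ y ∈ G.neighborFinset v, f s(v, y) < ∑ y ∈ G.neighborFinset u, f s(u, y) := by
  have key : ∀ P Q : Finset V, P ⊆ (G.neighborFinset v).erase u → Q ⊆ (G.neighborFinset u).erase v →
      K.erase u ⊆ Q → P.card ≤ Q.card → ∑ y ∈ P, f s(v, y) < ∑ y ∈ Q, f s(u, y) := by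
    intro P Q hP hQ hKQ hc
    rw [← Finset.sum_filter_not_add_sum_filter P (· ∈ K), ← Finset.sum_filter_not_add_sum_filter Q (· ∈ K)]
    have c1 := Finset.card_filter_add_card_filter_not (s := P) (· ∈ K)
    have c2 := Finset.card_filter_add_card_filter_not (s := Q) (· ∈ K)
    have s1 : ∑ y ∈ P with y ∉ K, f s(v, y) ≤ (P.filter (· ∉ K)).card * a := by
      refine Finset.sum_le_card_nsmul _ _ _ fun y hy => ?_
      rw [Finset.mem_filter] at hy
      have := hP hy.1
      simp at this
      exact hH v y hv hy.2 this.2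
    have s2 : ∑ y ∈ P with y ∈ K, f s(v, y) ≤ (P.filter (· ∈ K)).card * b := by
      refine Finset.sum_le_card_nsmul _ _ _ fun y hy => ?_
      rw [Finset.mem_filter] at hy
      have := hP hy.1
      simp at this
      exact (hX v y hv hy.2 this.2).2
    have s3 : (Q.filter (· ∉ K)).card * (a+1) ≤ ∑ y ∈ Q with y ∉ K, f s(u, y) := by
      rw [← smul_eq_mul]
      refine Finset.card_nsmul_le_sum _ _ _ fun y hy => ?_
      rw [Finset.mem_filter] at hy
      have := hQ hy.1
      simp at this
      rw [Sym2.eq_swap]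
      exact (hX y u hy.2 hu this.2.symm).1
    have s4 : (Q.filter (· ∈ K)).card * (b+1) ≤ ∑ y ∈ Q with y ∈ K, f s(u, y) := by
      rw [← smul_eq_mul]
      refine Finset.card_nsmul_le_sum _ _ _ fun y hy => ?_
      rw [Finset.mem_filter] at hy
      have := hQ hy.1
      simp at this
      exact hK u y hu hy.2 this.2
    have e1 : Q.filter (· ∈ K) = K.erase u := by
      ext y
      simp only [Finset.mem_filter, Finset.mem_erase]
      constructor
      · rintro ⟨h, h'⟩
        have := hQ h
        simp at this
        exact ⟨this.2.ne', h'⟩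
      · rintro h
        exact ⟨hKQ (Finset.mem_erase.2 h), h.2⟩
    have e2 : P.filter (· ∈ K) ⊆ K.erase u := by
      intro y hy
      rw [Finset.mem_filter] at hy
      have := hP hy.1
      simp at this
      exact Finset.mem_erase.2 ⟨this.1, hy.2⟩
    have e3 := Finset.card_le_card e2
    have e4 := Finset.card_erase_of_mem hu
    rw [e1] at c2 s4
    have := arith_aux (P.filter (· ∉ K)).card (P.filter (· ∈ K)).card (Q.filter (· ∉ K)).card
      (K.erase u).card a b (by omega) hab e3 (by omega)
    rw [e1]
    omega
  have hKu : K.erase u ⊆ (G.neighborFinset u).erase v := by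
    intro y hy
    simp at hy ⊢
    exact ⟨fun h => hv (h ▸ hy.2), hclique hu hy.2 (Ne.symm hy.1)⟩
  rw [← SimpleGraph.card_neighborFinset_eq_degree, ← SimpleGraph.card_neighborFinset_eq_degree] at hdeg
  by_cases hadj : G.Adj v u
  · have m1 : u ∈ G.neighborFinset v := by simpa using hadj
    have m2 : v ∈ G.neighborFinset u := by simpa using hadj.symm
    rw [← Finset.add_sum_erase _ _ m1, ← Finset.add_sum_erase _ _ m2, Sym2.eq_swap (a := v) (b := u)]
    have := key _ _ subset_rfl subset_rfl hKu (by
      rw [Finset.card_erase_of_mem m1, Finset.card_erase_of_mem m2]; omega)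
    omega
  · have m1 : u ∉ G.neighborFinset v := by simpa using hadj
    have m2 : v ∉ G.neighborFinset u := by simpa using fun h => hadj (SimpleGraph.Adj.symm h)
    have := key (G.neighborFinset v) (G.neighborFinset u) (by rw [Finset.erase_eq_of_notMem m1])
      (by rw [Finset.erase_eq_of_notMem m2]) (by rwa [Finset.erase_eq_of_notMem m2] at hKu) hdeg
    exact this

set_option maxHeartbeats 2000000 in
/-- If a graph `G` has a dominating clique `K` of order at least `4` and every vertex
outside `K` has degree at most the minimum degree over `K`, then `G` is antimagic. -/
theorem antimagic_of_dominating_clique {V : Type*} [Fintype V] [DecidableEq V]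
    (G : SimpleGraph V) [DecidableRel G.Adj] (K : Finset V)
    (hclique : G.IsClique ↑K) (hcard : 4 ≤ K.card)
    (hdom : ∀ v ∉ K, ∃ u ∈ K, G.Adj v u)
    (hdeg : ∀ v ∉ K, ∀ u ∈ K, G.degree v ≤ G.degree u) :
    IsAntimagic G := by
  classical
  have hdom' : ∀ v, ∃ u, v ∉ K → u ∈ K ∧ G.Adj v u := by
    intro v
    by_cases h : v ∈ K
    · exact ⟨v, fun h' => absurd h h'⟩
    · obtain ⟨u, hu⟩ := hdom v h
      exact ⟨u, fun _ => hu⟩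
  choose φ hφ using hdom'
  set EH : Finset (Sym2 V) := G.edgeFinset.filter (fun e => ∀ x ∈ e, x ∉ K) with hEH
  set EK : Finset (Sym2 V) := G.edgeFinset.filter (fun e => ∀ x ∈ e, x ∈ K) with hEK
  set R : Finset (Sym2 V) := Kᶜ.image (fun v => s(v, φ v)) with hR
  set C : Finset (Sym2 V) := G.edgeFinset \ (EH ∪ EK ∪ R) with hC
  have mEH : ∀ x y, s(x, y) ∈ EH ↔ G.Adj x y ∧ x ∉ K ∧ y ∉ K := by
    intro x y; simp [hEH]
  have mEK : ∀ x y, s(x, y) ∈ EK ↔ G.Adj x y ∧ x ∈ K ∧ y ∈ K := by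
    intro x y; simp [hEK]
  have mR : ∀ x y, x ∉ K → (s(x, y) ∈ R ↔ y = φ x) := by
    intro x y hx
    simp only [hR, Finset.mem_image, Finset.mem_compl, Sym2.eq_iff]
    constructor
    · rintro ⟨v, hv, ⟨rfl, rfl⟩ | ⟨rfl, rfl⟩⟩
      · rfl
      · exact absurd (hφ v hv).1 hx
    · rintro rfl
      exact ⟨x, hx, Or.inl ⟨rfl, rfl⟩⟩
  have RnH : ∀ e ∈ R, e ∉ EH := by
    intro e he
    obtain ⟨v, hv, rfl⟩ := Finset.mem_image.1 he
    rw [mEH]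
    exact fun h => h.2.2 (hφ v (Finset.mem_compl.1 hv)).1
  have RnK : ∀ e ∈ R, e ∉ EK := by
    intro e he
    obtain ⟨v, hv, rfl⟩ := Finset.mem_image.1 he
    rw [mEK]
    exact fun h => (Finset.mem_compl.1 hv) h.2.1
  have RE : ∀ e ∈ R, e ∈ G.edgeFinset := by
    intro e he
    obtain ⟨v, hv, rfl⟩ := Finset.mem_image.1 he
    simpa using (hφ v (Finset.mem_compl.1 hv)).2
  have HnK : ∀ e ∈ EH, e ∉ EK := by
    intro e
    induction e with | _ x y => rw [mEH, mEK]; tauto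
  obtain ⟨f0, -, b0, -, -⟩ := ext_lab (fun _ : Sym2 V => 0) ∅ EH (by simp) (by simp) (fun _ => 0)
  rw [Finset.empty_union] at b0
  obtain ⟨f1, e1, b1, l1, -⟩ := ext_lab f0 EH C (by
    rw [Finset.disjoint_left]; intro e he; simp [hC, he]) b0 (fun _ => 0)
  set p : V → ℕ := fun v => ∑ y ∈ (G.neighborFinset v).erase (φ v), f1 s(v, y) with hp
  obtain ⟨f2, e2, b2, l2, o2⟩ := ext_lab f1 (EH ∪ C) R (by
    rw [Finset.disjoint_right]; intro e he; simp [hC, he, RnH e he]) b1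
    (fun e => ∑ x ∈ Finset.univ.filter (fun x => x ∈ e ∧ x ∉ K), p x)
  have o2' : ∀ v v', v ∉ K → v' ∉ K → p v < p v' → f2 s(v, φ v) < f2 s(v', φ v') := by
    have hs : ∀ v, v ∉ K → Finset.univ.filter (fun x => x ∈ s(v, φ v) ∧ x ∉ K) = {v} := by
      intro v hv
      ext x
      simp only [Finset.mem_filter, Finset.mem_univ, true_and, Sym2.mem_iff, Finset.mem_singleton]
      constructor
      · rintro ⟨rfl | rfl, h⟩
        · rfl
        · exact absurd (hφ v hv).1 h
      · rintro rfl
        exact ⟨Or.inl rfl, hv⟩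
    intro v v' hv hv' h
    apply o2 _ ((mR _ _ hv).2 rfl) _ ((mR _ _ hv').2 rfl)
    rw [hs v hv, hs v' hv']
    simpa using h
  set w : V → ℕ := fun u => ∑ y ∈ G.neighborFinset u with y ∉ K, f2 s(u, y) with hw
  obtain ⟨ρ, -, bρ, -, oρ⟩ := ext_lab (fun _ : V => 0) ∅ K (by simp) (by simp) w
  rw [Finset.empty_union] at bρ
  obtain ⟨f, e3, b3, l3, o3⟩ := ext_lab f2 (EH ∪ C ∪ R) EK (by
    rw [Finset.disjoint_right]; intro e he
    simp only [hC, Finset.mem_union, Finset.mem_sdiff]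
    have := fun h => HnK e h he
    have := fun h => RnK e h he
    tauto) b2
    (fun e => ∑ x ∈ Finset.univ.filter (fun x => x ∈ e), ρ x)
  have hE : EH ∪ C ∪ R ∪ EK = G.edgeFinset := by
    ext e
    have h1 : e ∈ EH → e ∈ G.edgeFinset := fun h => (Finset.mem_filter.1 h).1
    have h2 : e ∈ EK → e ∈ G.edgeFinset := fun h => (Finset.mem_filter.1 h).1
    have h3 := RE e
    simp only [hC, Finset.mem_union, Finset.mem_sdiff]
    tauto
  rw [hE] at b3
  refine ⟨f, b3, ?_⟩
  have o3' : ∀ i j l, i ∈ K → j ∈ K → l ∈ K → l ≠ i → l ≠ j → ρ i < ρ j →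
      f s(i, l) < f s(j, l) := by
    intro i j l hi hj hl hli hlj h
    have hs : ∀ i, l ≠ i → ∑ x ∈ Finset.univ.filter (fun x => x ∈ s(i, l)), ρ x = ρ i + ρ l := by
      intro i hli
      rw [← Finset.sum_pair hli.symm]
      congr 1
      ext x; simp
    apply o3 _ ((mEK _ _).2 ⟨hclique hi hl hli.symm, hi, hl⟩) _
      ((mEK _ _).2 ⟨hclique hj hl hlj.symm, hj, hl⟩)
    rw [hs i hli, hs j hlj]
    omega
  have f2eq : ∀ x y, x ∉ K → f s(x, y) = f2 s(x, y) := by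
    intro x y hx
    apply e3
    rw [mEK]; tauto
  have f2eq' : ∀ x y, y ∉ K → f s(x, y) = f2 s(x, y) := by
    intro x y hx
    apply e3
    rw [mEK]; tauto
  -- vertices outside the clique
  have σH : ∀ v, v ∉ K → ∑ y ∈ G.neighborFinset v, f s(v, y) = f2 s(v, φ v) + p v := by
    intro v hv
    have m : φ v ∈ G.neighborFinset v := by simpa using (hφ v hv).2
    rw [← Finset.add_sum_erase _ _ m, f2eq v _ hv]
    congr 1
    apply Finset.sum_congr rfl
    intro y hy
    rw [f2eq v _ hv, e2]
    rw [mR _ _ hv]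
    exact (Finset.mem_erase.1 hy).1
  have hHH : ∀ v v', v ∉ K → v' ∉ K →
      ∑ y ∈ G.neighborFinset v, f s(v, y) = ∑ y ∈ G.neighborFinset v', f s(v', y) → v = v' := by
    intro v v' hv hv' h
    rw [σH v hv, σH v' hv'] at h
    rcases lt_trichotomy (p v) (p v') with h' | h' | h'
    · have := o2' v v' hv hv' h'
      omega
    · have hq : f2 s(v, φ v) = f2 s(v', φ v') := by omega
      have := b2.injOn (by simp [(mR v _ hv).2 rfl]) (by simp [(mR v' _ hv').2 rfl]) hq
      rw [Sym2.eq_iff] at this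
      rcases this with h | h
      · exact h.1
      · exact absurd (h.1 ▸ (hφ v' hv').1) hv
    · have := o2' v' v hv' hv h'
      omega
  -- clique vertices
  have σK : ∀ u u', u ∈ K → u' ∈ K → ρ u < ρ u' →
      ∑ y ∈ G.neighborFinset u, f s(u, y) < ∑ y ∈ G.neighborFinset u', f s(u', y) := by
    intro u u' hu hu' h
    have hne : u ≠ u' := by rintro rfl; omega
    have hw' : w u ≤ w u' := by
      by_contra hc
      have := oρ u' hu' u hu (by omega)
      omega
    have hsp : ∀ u u', u ∈ K → u' ∈ K → u ≠ u' → ∑ y ∈ G.neighborFinset u, f s(u, y) =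
        w u + (f s(u, u') + ∑ y ∈ (K.erase u).erase u', f s(u, y)) := by
      intro u u' hu hu' hne
      rw [← Finset.sum_filter_not_add_sum_filter _ (· ∈ K)]
      congr 1
      · apply Finset.sum_congr rfl
        intro y hy
        exact f2eq' _ _ (Finset.mem_filter.1 hy).2
      · rw [Finset.add_sum_erase (K.erase u) (fun y => f s(u, y)) (Finset.mem_erase.2 ⟨hne.symm, hu'⟩)]
        apply Finset.sum_congr _ (fun _ _ => rfl)
        ext y
        simp only [Finset.mem_filter, SimpleGraph.mem_neighborFinset, Finset.mem_erase]
        exact ⟨fun h => ⟨h.1.ne', h.2⟩, fun h => ⟨hclique hu h.2 h.1.symm, h.2⟩⟩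
    rw [hsp u u' hu hu' hne, hsp u' u hu' hu hne.symm, Sym2.eq_swap (a := u') (b := u),
      Finset.erase_right_comm (a := u') (b := u)]
    have : ∑ y ∈ (K.erase u).erase u', f s(u, y) < ∑ y ∈ (K.erase u).erase u', f s(u', y) := by
      apply Finset.sum_lt_sum_of_nonempty
      · rw [← Finset.card_pos, Finset.card_erase_of_mem (Finset.mem_erase.2 ⟨hne.symm, hu'⟩),
          Finset.card_erase_of_mem hu]
        omega
      · intro y hy
        simp only [Finset.mem_erase] at hy
        exact o3' u u' y hu hu' hy.2.2 hy.2.1 hy.1 h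
    omega
  -- comparison
  have hHK : ∀ v u, v ∉ K → u ∈ K →
      ∑ y ∈ G.neighborFinset v, f s(v, y) < ∑ y ∈ G.neighborFinset u, f s(u, y) := by
    intro v u hv hu
    have cH : EH.card ≤ (EH ∪ C).card := Finset.card_le_card Finset.subset_union_left
    have cX : (EH ∪ C).card ≤ (EH ∪ C ∪ R).card := Finset.card_le_card Finset.subset_union_left
    refine sum_cmp G K hclique hcard f EH.card (EH ∪ C ∪ R).card (by omega) ?_ ?_ ?_ v u hv hu
      (hdeg v hv u hu)
    · intro x y hx hy hxy
      have hm : s(x, y) ∈ EH := (mEH _ _).2 ⟨hxy, hx, hy⟩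
      have hnR : s(x, y) ∉ R := fun h => RnH _ h hm
      have hnC : s(x, y) ∉ C := by simp [hC, hm]
      rw [f2eq _ _ hx, e2 _ hnR, e1 _ hnC]
      have := b0.mapsTo (Finset.mem_coe.2 hm)
      simp at this
      exact this.2
    · intro x y hx hy hxy
      have hnH : s(x, y) ∉ EH := by rw [mEH]; tauto
      have hnK : s(x, y) ∉ EK := by rw [mEK]; tauto
      have hm : s(x, y) ∈ EH ∪ C ∪ R := by
        have : s(x, y) ∈ EH ∪ C ∪ R ∪ EK := by rw [hE]; simpa using hxy
        rw [Finset.mem_union] at this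
        tauto
      rw [f2eq _ _ hx]
      constructor
      · by_cases hr : s(x, y) ∈ R
        · have := l2 _ hr
          omega
        · rw [e2 _ hr]
          apply l1
          simp only [Finset.mem_union] at hm
          tauto
      · have := b2.mapsTo (Finset.mem_coe.2 hm)
        rw [Finset.mem_coe, Finset.mem_Icc] at this
        exact this.2
    · intro x y hx hy hxy
      exact l3 _ ((mEK _ _).2 ⟨hxy, hx, hy⟩)
  intro u u' h
  simp only at h
  by_cases hu : u ∈ K <;> by_cases hu' : u' ∈ K
  · rcases lt_trichotomy (ρ u) (ρ u') with h' | h' | h'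
    · have := σK u u' hu hu' h'
      omega
    · exact bρ.injOn hu hu' h'
    · have := σK u' u hu' hu h'
      omega
  · have := hHK u' u hu' hu
    omega
  · have := hHK u u' hu hu'
    omega
  · exact hHH u u' hu hu' h
end

section
/- Let G = (V,E) be a finite simple graph with n vertices and m edges having a dominating clique K of order k = |K| ≥ 3. If m ≥ 3(n−k) − 2 + k(k−1)/2, then G is 3-antimagic. -/
open Finset

/-- A finite simple graph `G` with `m` edges is *`C`-antimagic* if there is an injective
labelling of its edges by labels in `{1, 2, …, m + C}` such that the vertex sums
`σ(u) = ∑_{v : uv ∈ E} f(uv)` are pairwise distinct. -/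
def IsCAntimagic {V : Type*} [Fintype V] [DecidableEq V] (G : SimpleGraph V)
    [DecidableRel G.Adj] (C : ℕ) : Prop :=
  ∃ f : Sym2 V → ℕ,
    Set.InjOn f ↑G.edgeFinset ∧
    (∀ e ∈ G.edgeFinset, f e ∈ Finset.Icc 1 (G.edgeFinset.card + C)) ∧
    Function.Injective fun u : V => ∑ v ∈ G.neighborFinset u, f s(u, v)

lemma rank_exists {V : Type*} [DecidableEq V] (w : V → ℕ) (A : Finset V) :
    ∃ idx : V → ℕ, Set.InjOn idx ↑A ∧ A.image idx = Finset.range A.card ∧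
      ∀ x ∈ A, ∀ y ∈ A, idx x < idx y → w x ≤ w y := by
  induction A using Finset.induction_on_max_value w with
  | empty => exact ⟨fun _ => 0, by simp, by simp, by simp⟩
  | insert a s ha hmax ih =>
    obtain ⟨idx, hinj, him, hmono⟩ := ih
    have hlt : ∀ x ∈ s, idx x < s.card := fun x hx => by
      rw [← Finset.mem_range, ← him]; exact Finset.mem_image_of_mem _ hx
    have hne : ∀ x ∈ s, x ≠ a := fun x hx h => ha (h ▸ hx)
    refine ⟨fun x => if x = a then s.card else idx x, ?_, ?_, ?_⟩
    · intro x hx y hy hxy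
      simp only [Finset.coe_insert, Set.mem_insert_iff, Finset.mem_coe] at hx hy
      simp only at hxy
      rcases hx with rfl | hx <;> rcases hy with rfl | hy
      · rfl
      · have := hlt y hy; simp [hne y hy] at hxy; omega
      · have := hlt x hx; simp [hne x hx] at hxy; omega
      · simp only [hne x hx, hne y hy, if_false] at hxy
        exact hinj hx hy hxy
    · rw [Finset.image_insert, Finset.card_insert_of_notMem ha, Finset.range_add_one, ← him]
      congr 1
      · simp
      · exact Finset.image_congr (fun x hx => by simp [hne x hx])
    · intro x hx y hy hxy
      simp only [Finset.mem_insert] at hx hy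
      rcases hx with rfl | hx <;> rcases hy with rfl | hy
      · exact le_rfl
      · have := hlt y hy; simp [hne y hy] at hxy; omega
      · exact hmax x hx
      · simp only [hne x hx, hne y hy, if_false] at hxy
        exact hmono x hx y hy hxy

lemma core (S : Set ℕ) (hS : ∀ s ∈ S, s + 1 ∉ S ∧ s + 2 ∉ S) (q : ℕ) :
    ∀ (p : ℕ → ℕ), (∀ i, i + 1 < q + 3 → p i ≤ p (i + 1)) → ∀ a b, (b = a + 1 ∨ b = a + 2) →
    ∃ g : ℕ → ℕ → ℕ, (∀ i, g i i = 0) ∧ (∀ i j, g i j = g j i) ∧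
      (∀ i j, i < j → j < q + 3 → g i j ≤ b + (q + 3).choose 2 + 1 ∧ (g i j = a ∨ b ≤ g i j)) ∧
      (∀ i j i' j', i < j → j < q + 3 → i' < j' → j' < q + 3 → g i j = g i' j' → i = i' ∧ j = j') ∧
      (∀ i, i < q + 3 → p i + ∑ j ∈ Finset.range (q + 3), g i j ∉ S) ∧
      (∀ i, i + 1 < q + 3 → p i + ∑ j ∈ Finset.range (q + 3), g i j <
        p (i + 1) + ∑ j ∈ Finset.range (q + 3), g (i + 1) j) ∧
      (∀ j j', 0 < j → j < j' → j' < q + 3 → g 0 j < g 0 j') := by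
  induction q with
  | zero =>
    intro p hp a b hab
    obtain ⟨y, hy1, hy2, hyS⟩ : ∃ y, b ≤ y ∧ y ≤ b + 1 ∧ p 0 + (a + y) ∉ S := by
      by_cases h : p 0 + (a + b) ∈ S
      · exact ⟨b + 1, by omega, by omega, (hS _ h).1⟩
      · exact ⟨b, by omega, by omega, h⟩
    obtain ⟨z, hz1, hz2, hzS, hzS'⟩ : ∃ z, y + 1 ≤ z ∧ z ≤ y + 3 ∧
        p 1 + (a + z) ∉ S ∧ p 2 + (y + z) ∉ S := by
      by_contra! hcon
      have h1 := hcon (y + 1) (by omega) (by omega)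
      have h2 := hcon (y + 2) (by omega) (by omega)
      have h3 := hcon (y + 3) (by omega) (by omega)
      have e1 := hS (p 1 + (a + (y + 1)))
      have e2 := hS (p 1 + (a + (y + 2)))
      have e3 := hS (p 2 + (y + (y + 1)))
      have e4 := hS (p 2 + (y + (y + 2)))
      simp only [← add_assoc] at *
      have r1 : p 1 + a + y + 1 + 1 = p 1 + a + y + 2 := by omega
      have r2 : p 1 + a + y + 1 + 2 = p 1 + a + y + 3 := by omega
      have r3 : p 1 + a + y + 2 + 1 = p 1 + a + y + 3 := by omega
      have r4 : p 2 + y + y + 1 + 1 = p 2 + y + y + 2 := by omega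
      have r5 : p 2 + y + y + 1 + 2 = p 2 + y + y + 3 := by omega
      have r6 : p 2 + y + y + 2 + 1 = p 2 + y + y + 3 := by omega
      rw [r1, r2] at e1
      rw [r3] at e2
      rw [r4, r5] at e3
      rw [r6] at e4
      tauto
    have hp0 := hp 0 (by omega)
    have hp1 := hp 1 (by omega)
    simp only [zero_add, Nat.reduceAdd] at hp0 hp1
    have hch : (0 + 3).choose 2 = 3 := by decide
    refine ⟨fun i j => if i = j then 0 else if i + j = 1 then a else if i + j = 2 then y else z,
      by simp, ?_, ?_, ?_, ?_, ?_, ?_⟩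
    · intro i j; simp only [eq_comm, add_comm]
    · intro i j hij hj
      rw [hch]
      simp only
      split_ifs <;> omega
    · intro i j i' j' h1 h2 h3 h4
      simp only
      split_ifs <;> omega
    · intro i hi
      have : i = 0 ∨ i = 1 ∨ i = 2 := by omega
      rcases this with rfl | rfl | rfl <;> simp [Finset.sum_range_succ] <;> assumption
    · intro i hi
      have : i = 0 ∨ i = 1 := by omega
      rcases this with rfl | rfl <;> simp [Finset.sum_range_succ] <;> omega
    · intro j j' h1 h2 h3
      simp only
      split_ifs <;> omega
  | succ q ih =>
    intro p hp a b hab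
    -- lab ε i is the label of the edge (0, i + 1)
    let lab : ℕ → ℕ → ℕ := fun ε i => if i = 0 then a else if i = q + 2 then b + q + 1 + ε else b + i - 1
    obtain ⟨ε, hε, hεS⟩ : ∃ ε, ε ≤ 1 ∧ p 0 + ∑ i ∈ Finset.range (q + 3), lab ε i ∉ S := by
      have hl : ∑ i ∈ Finset.range (q + 3), lab 1 i = ∑ i ∈ Finset.range (q + 3), lab 0 i + 1 := by
        rw [Finset.sum_range_succ, Finset.sum_range_succ _ (q + 2)]
        have : ∑ i ∈ Finset.range (q + 2), lab 1 i = ∑ i ∈ Finset.range (q + 2), lab 0 i := by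
          apply Finset.sum_congr rfl
          intro i hi
          have := Finset.mem_range.1 hi
          simp only [lab]
          split_ifs <;> omega
        rw [this]
        simp [lab]; omega
      by_cases h : p 0 + ∑ i ∈ Finset.range (q + 3), lab 0 i ∈ S
      · refine ⟨1, le_rfl, ?_⟩
        rw [hl, ← add_assoc]; exact (hS _ h).1
      · exact ⟨0, by omega, h⟩
    have hlabmono : ∀ i j, i < j → j < q + 3 → lab ε i < lab ε j := by
      intro i j h1 h2
      simp only [lab]
      split_ifs <;> omega
    obtain ⟨g, g0, gsym, gr, ginj, gS, glt, gmono⟩ := ih (fun i => p (i + 1) + lab ε i) (by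
      intro i hi
      have := hp (i + 1) (by omega)
      have := hlabmono i (i + 1) (by omega) hi
      omega) (b + q + 2 - ε) (b + q + 3) (by omega)
    have hch : (q + 1 + 3).choose 2 = (q + 3).choose 2 + (q + 3) := by
      rw [show q + 1 + 3 = (q + 3) + 1 by omega, Nat.choose_succ_succ' (q + 3) 1, Nat.choose_one_right]
      simp only [Nat.reduceAdd]; omega
    have hlabr : ∀ i, i < q + 3 → lab ε i < b + q + 3 ∧ (lab ε i = a ∨ b ≤ lab ε i) ∧
        lab ε i ≠ b + q + 2 - ε := by
      intro i hi
      simp only [lab]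
      split_ifs <;> omega
    let g' : ℕ → ℕ → ℕ := fun i j => match i, j with
      | 0, 0 => 0
      | 0, j + 1 => lab ε j
      | i + 1, 0 => lab ε i
      | i + 1, j + 1 => g i j
    have s0 : ∑ j ∈ Finset.range (q + 1 + 3), g' 0 j = ∑ i ∈ Finset.range (q + 3), lab ε i := by
      rw [show q + 1 + 3 = (q + 3) + 1 by omega, Finset.sum_range_succ']
      rfl
    have s1 : ∀ i, ∑ j ∈ Finset.range (q + 1 + 3), g' (i + 1) j =
        ∑ j ∈ Finset.range (q + 3), g i j + lab ε i := by
      intro i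
      rw [show q + 1 + 3 = (q + 3) + 1 by omega, Finset.sum_range_succ']
    refine ⟨g', ?_, ?_, ?_, ?_, ?_, ?_, ?_⟩
    · rintro (_ | i)
      · rfl
      · exact g0 i
    · rintro (_ | i) (_ | j)
      · rfl
      · rfl
      · rfl
      · exact gsym i j
    · rintro (_ | i) (_ | j) h1 h2
      · omega
      · change lab ε j ≤ _ ∧ (lab ε j = a ∨ b ≤ lab ε j)
        have := hlabr j (by omega)
        omega
      · omega
      · change g i j ≤ _ ∧ (g i j = a ∨ b ≤ g i j)
        have := gr i j (by omega) (by omega)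
        omega
    · have key : ∀ i i' j', i < q + 3 → i' < j' → j' < q + 3 → lab ε i ≠ g i' j' := by
        intro i i' j' h1 h2 h3 h
        have := gr i' j' h2 h3
        have := hlabr i h1
        omega
      rintro (_ | i) (_ | j) (_ | i') (_ | j') h1 h2 h3 h4 h <;> try omega
      · change lab ε j = lab ε j' at h
        rcases lt_trichotomy j j' with hlt | rfl | hlt
        · have := hlabmono _ _ hlt (by omega); omega
        · simp
        · have := hlabmono _ _ hlt (by omega); omega
      · exact absurd h (key _ _ _ (by omega) (by omega) (by omega))
      · exact absurd h.symm (key _ _ _ (by omega) (by omega) (by omega))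
      · have := ginj i j i' j' (by omega) (by omega) (by omega) (by omega) h
        omega
    · rintro (_ | i) hi
      · rw [s0]; exact hεS
      · rw [s1]
        have := gS i (by omega)
        rw [show ∀ x y z : ℕ, x + (y + z) = x + z + y from fun x y z => by omega]
        exact this
    · rintro (_ | i) hi
      · rw [s0, s1]
        have hp0 := hp 0 (by omega)
        have : ∑ i ∈ Finset.range (q + 3), lab ε i < ∑ j ∈ Finset.range (q + 3), g 0 j + lab ε 0 := by
          rw [Finset.sum_range_succ', Finset.sum_range_succ' _ (q + 2), g0]
          have : ∑ i ∈ Finset.range (q + 2), lab ε (i + 1) < ∑ i ∈ Finset.range (q + 2), g 0 (i + 1) := by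
            apply Finset.sum_lt_sum_of_nonempty (by simp)
            intro i hi
            have hi := Finset.mem_range.1 hi
            have h1 := gr 0 (i + 1) (by omega) (by omega)
            have h2 := gr 0 1 (by omega) (by omega)
            by_cases hiq : i = q + 1
            · have := gmono 1 (i + 1) (by omega) (by omega) (by omega)
              have := hlabr (i + 1) (by omega)
              omega
            · simp only [lab]
              split_ifs <;> omega
          omega
        omega
      · rw [s1, s1]
        have := glt i (by omega)
        omega
    · rintro (_ | j) (_ | j') h1 h2 h3 <;> try omega
      exact hlabmono _ _ (by omega) (by omega)

/-- If a graph `G` with `n` vertices and `m` edges has a dominating clique `K` of order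
`k ≥ 3` and `m ≥ 3(n - k) - 2 + k(k-1)/2`, then `G` is `3`-antimagic. -/
theorem three_antimagic_of_dominating_clique {V : Type*} [Fintype V] [DecidableEq V]
    (G : SimpleGraph V) [DecidableRel G.Adj] (K : Finset V)
    (hclique : G.IsClique ↑K) (hcard : 3 ≤ K.card)
    (hdom : ∀ v ∉ K, ∃ u ∈ K, G.Adj v u)
    (hm : 3 * ((Fintype.card V : ℤ) - K.card) - 2 + K.card * (K.card - 1) / 2
        ≤ (G.edgeFinset.card : ℤ)) :
    IsCAntimagic G 3 := by
  classical
  have hc' : ∀ v, ∃ u, v ∉ K → u ∈ K ∧ G.Adj v u := by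
    intro v
    by_cases hv : v ∈ K
    · exact ⟨v, fun h => absurd hv h⟩
    · obtain ⟨u, hu⟩ := hdom v hv
      exact ⟨u, fun _ => hu⟩
  choose c hc using hc'
  set O : Finset V := univ \ K with hO
  have memO : ∀ v, v ∈ O ↔ v ∉ K := by simp [hO]
  have einj : ∀ v ∈ O, ∀ v' x, (v' ∈ O) → s(v', x) = s(v, c v) → v' = v ∧ x = c v := by
    intro v hv v' x hv' h
    rcases Sym2.eq_iff.1 h with h | h
    · exact h
    · exact absurd (h.1 ▸ (hc v ((memO v).1 hv)).1) ((memO v').1 hv')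
  set C : Finset (Sym2 V) := O.image (fun v => s(v, c v)) with hC
  set EK : Finset (Sym2 V) := K.offDiag.image Sym2.mk.uncurry with hEK
  have memEK : ∀ x y, s(x, y) ∈ EK ↔ x ∈ K ∧ y ∈ K ∧ x ≠ y := by
    intro x y
    simp only [hEK, Finset.mem_image, Finset.mem_offDiag, Prod.exists, Function.uncurry_apply_pair]
    constructor
    · rintro ⟨a, b, ⟨ha, hb, hab⟩, h⟩
      rcases Sym2.eq_iff.1 h with ⟨rfl, rfl⟩ | ⟨rfl, rfl⟩
      · exact ⟨ha, hb, hab⟩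
      · exact ⟨hb, ha, hab.symm⟩
    · rintro ⟨hx, hy, hxy⟩
      exact ⟨x, y, ⟨hx, hy, hxy⟩, rfl⟩
  have hEKsub : EK ⊆ G.edgeFinset := by
    intro e
    induction e using Sym2.ind with | _ x y => ?_
    rw [memEK, SimpleGraph.mem_edgeFinset, SimpleGraph.mem_edgeSet]
    rintro ⟨hx, hy, hxy⟩
    exact hclique hx hy hxy
  have hCsub : C ⊆ G.edgeFinset \ EK := by
    intro e he
    obtain ⟨v, hv, rfl⟩ := Finset.mem_image.1 he
    have hv := (memO v).1 hv
    rw [Finset.mem_sdiff, memEK, SimpleGraph.mem_edgeFinset, SimpleGraph.mem_edgeSet]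
    exact ⟨(hc v hv).2, fun h => hv h.1⟩
  set H : Finset (Sym2 V) := (G.edgeFinset \ EK) \ C with hH
  have cEK : EK.card = K.card.choose 2 := Sym2.card_image_offDiag K
  have cC : C.card = O.card := Finset.card_image_of_injOn
    (fun v hv v' hv' h => (einj v' hv' v _ hv h).1)
  have cO : O.card + K.card = Fintype.card V := by
    rw [hO, Finset.card_sdiff_add_card_eq_card (Finset.subset_univ K), Finset.card_univ]
  have cE1 : (G.edgeFinset \ EK).card + EK.card = G.edgeFinset.card :=
    Finset.card_sdiff_add_card_eq_card hEKsub
  have cE2 : H.card + C.card = (G.edgeFinset \ EK).card :=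
    Finset.card_sdiff_add_card_eq_card hCsub
  set m := G.edgeFinset.card with hmdef
  set r := O.card with hr
  set t := (G.edgeFinset \ EK).card with ht
  have htr : 3 * r ≤ t + 2 := by
    have h2 : ((K.card : ℤ) * (K.card - 1) / 2) = ((K.card.choose 2 : ℕ) : ℤ) := by
      rw [Nat.choose_two_right]
      push_cast [Nat.cast_sub (show 1 ≤ K.card by omega)]
      rfl
    rw [h2] at hm
    omega
  set P : Finset ℕ := (Finset.range r).image (fun i => 3 * i + 1) with hP
  have cP : P.card = r := by
    rw [hP, Finset.card_image_of_injective _ (fun a b h => by have h : 3 * a + 1 = 3 * b + 1 := h; omega),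
      Finset.card_range]
  have hPsub : P ⊆ Finset.Icc 1 t := by
    intro x hx
    obtain ⟨i, hi, rfl⟩ := Finset.mem_image.1 hx
    have := Finset.mem_range.1 hi
    rw [Finset.mem_Icc]; omega
  have cT : (Finset.Icc 1 t \ P).card + P.card = t := by
    rw [Finset.card_sdiff_add_card_eq_card hPsub]; simp
  let eqv : H ≃ (Finset.Icc 1 t \ P : Finset ℕ) := Finset.equivOfCardEq (by omega)
  obtain ⟨fH, fH0, fHmem, fHinj⟩ : ∃ fH : Sym2 V → ℕ, (∀ e, e ∉ H → fH e = 0) ∧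
      (∀ e ∈ H, fH e ∈ Finset.Icc 1 t \ P) ∧ Set.InjOn fH ↑H := by
    refine ⟨fun e => if h : e ∈ H then (eqv ⟨e, h⟩ : ℕ) else 0, ?_, ?_, ?_⟩
    · intro e he; simp [he]
    · intro e he; simp only [he, dif_pos]; exact (eqv ⟨e, he⟩).2
    · intro e he e' he' h
      have he1 : e ∈ H := he
      have he2 : e' ∈ H := he'
      simp only [he1, he2, dif_pos] at h
      have := eqv.injective (Subtype.ext h)
      exact congrArg Subtype.val this
  obtain ⟨idx, idxinj, idxim, idxmono⟩ :=
    rank_exists (fun v => ∑ x ∈ G.neighborFinset v, fH s(v, x)) O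
  have idxlt : ∀ v ∈ O, idx v < r := fun v hv => by
    rw [← Finset.mem_range, hr, ← idxim]; exact Finset.mem_image_of_mem _ hv
  obtain ⟨fC, fC0, fCv⟩ : ∃ fC : Sym2 V → ℕ, (∀ e, e ∉ C → fC e = 0) ∧
      (∀ v ∈ O, fC s(v, c v) = 3 * idx v + 1) := by
    refine ⟨fun e => ∑ v ∈ O, if e = s(v, c v) then 3 * idx v + 1 else 0, ?_, ?_⟩
    · intro e he
      apply Finset.sum_eq_zero
      intro v hv
      rw [if_neg]
      rintro rfl
      exact he (Finset.mem_image_of_mem _ hv)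
    · intro v hv
      simp only
      rw [Finset.sum_eq_single v]
      · simp
      · intro v' hv' hne
        rw [if_neg]
        intro h
        exact hne (einj v' hv' v _ hv h).1.symm
      · intro h; exact absurd hv h
  let w : V → ℕ := fun v => ∑ x ∈ G.neighborFinset v, fH s(v, x)
  let S : Set ℕ := {s | ∃ v ∈ O, s = w v + (3 * idx v + 1)}
  have hsep : ∀ v ∈ O, ∀ v' ∈ O, idx v < idx v' →
      w v + (3 * idx v + 1) + 3 ≤ w v' + (3 * idx v' + 1) := by
    intro v hv v' hv' h
    have : w v ≤ w v' := idxmono v hv v' hv' h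
    omega
  have hS : ∀ s ∈ S, s + 1 ∉ S ∧ s + 2 ∉ S := by
    rintro s ⟨v, hv, rfl⟩
    have key : ∀ d, 1 ≤ d → d ≤ 2 → w v + (3 * idx v + 1) + d ∉ S := by
      rintro d h1 h2 ⟨v', hv', h⟩
      rcases lt_trichotomy (idx v) (idx v') with hlt | heq | hlt
      · have := hsep v hv v' hv' hlt; omega
      · have := idxinj hv hv' heq
        subst this
        omega
      · have := hsep v' hv' v hv hlt; omega
    exact ⟨key 1 (by omega) (by omega), key 2 (by omega) (by omega)⟩
  let p : V → ℕ := fun v => ∑ x ∈ G.neighborFinset v, (fH s(v, x) + fC s(v, x))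
  obtain ⟨κ, κinj, κim, κmono⟩ := rank_exists p K
  have κlt : ∀ v ∈ K, κ v < K.card := fun v hv => by
    rw [← Finset.mem_range, ← κim]; exact Finset.mem_image_of_mem _ hv
  have κsurj : ∀ i, ∃ v, i < K.card → v ∈ K ∧ κ v = i := by
    intro i
    by_cases hi : i < K.card
    · rw [← Finset.mem_range, ← κim] at hi
      obtain ⟨v, hv, h⟩ := Finset.mem_image.1 hi
      exact ⟨v, fun _ => ⟨hv, h⟩⟩
    · have : K.Nonempty := Finset.card_pos.1 (by omega)
      exact ⟨this.choose, fun h => absurd h hi⟩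
  choose ν hν using κsurj
  have νκ : ∀ v ∈ K, ν (κ v) = v := by
    intro v hv
    have := hν (κ v) (κlt v hv)
    exact κinj this.1 hv this.2
  obtain ⟨q, hq⟩ : ∃ q, K.card = q + 3 := ⟨K.card - 3, by omega⟩
  obtain ⟨g, g0, gsym, gr, ginj, gS, glt, -⟩ := core S hS q (fun i => p (ν i)) (by
    intro i hi
    have h1 := hν i (by omega)
    have h2 := hν (i + 1) (by omega)
    exact κmono _ h1.1 _ h2.1 (by omega)) (t + 1) (t + 2) (by omega)
  rw [← hq] at gr ginj gS glt
  let fK : Sym2 V → ℕ := fun e => if e ∈ EK then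
    Sym2.lift ⟨fun x y => g (κ x) (κ y), fun x y => gsym _ _⟩ e else 0
  have fK0 : ∀ e, e ∉ EK → fK e = 0 := fun e he => by simp [fK, he]
  have fKv : ∀ x ∈ K, ∀ y ∈ K, x ≠ y → fK s(x, y) = g (κ x) (κ y) := by
    intro x hx y hy hxy
    have : s(x, y) ∈ EK := (memEK x y).2 ⟨hx, hy, hxy⟩
    simp [fK, this]
  -- every clique edge has a sorted form
  have sortK : ∀ e ∈ EK, ∃ x y, x ∈ K ∧ y ∈ K ∧ κ x < κ y ∧ e = s(x, y) ∧
      fK e = g (κ x) (κ y) := by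
    intro e
    induction e using Sym2.ind with | _ x y => ?_
    intro he
    obtain ⟨hx, hy, hxy⟩ := (memEK x y).1 he
    rcases lt_trichotomy (κ x) (κ y) with h | h | h
    · exact ⟨x, y, hx, hy, h, rfl, fKv x hx y hy hxy⟩
    · exact absurd (κinj hx hy h) hxy
    · exact ⟨y, x, hy, hx, h, Sym2.eq_swap, by rw [Sym2.eq_swap]; exact fKv y hy x hx hxy.symm⟩
  have fKr : ∀ e ∈ EK, t + 1 ≤ fK e ∧ fK e ≤ m + 3 := by
    intro e he
    obtain ⟨x, y, hx, hy, h, -, h'⟩ := sortK e he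
    have := gr (κ x) (κ y) h (κlt y hy)
    rw [h']
    omega
  have fKinj : Set.InjOn fK ↑EK := by
    intro e he e' he' heq
    obtain ⟨x, y, hx, hy, h, h1, h2⟩ := sortK e he
    obtain ⟨x', y', hx', hy', h', h1', h2'⟩ := sortK e' he'
    have := ginj _ _ _ _ h (κlt y hy) h' (κlt y' hy') (by rw [← h2, ← h2', heq])
    rw [h1, h1', κinj hx hx' this.1, κinj hy hy' this.2]
  have fCr : ∀ e ∈ C, fC e ∈ P := by
    intro e he
    obtain ⟨v, hv, rfl⟩ := Finset.mem_image.1 he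
    rw [fCv v hv]
    exact Finset.mem_image.2 ⟨idx v, Finset.mem_range.2 (idxlt v hv), rfl⟩
  have fCinj : Set.InjOn fC ↑C := by
    intro e he e' he' heq
    obtain ⟨v, hv, rfl⟩ := Finset.mem_image.1 he
    obtain ⟨v', hv', rfl⟩ := Finset.mem_image.1 he'
    rw [fCv v hv, fCv v' hv'] at heq
    have : v = v' := idxinj hv hv' (by omega)
    rw [this]
  let f : Sym2 V → ℕ := fun e => fH e + fC e + fK e
  -- trichotomy of edges
  have tri : ∀ e ∈ G.edgeFinset,
      (e ∈ H ∧ f e = fH e ∧ 1 ≤ f e ∧ f e ≤ t ∧ f e ∉ P) ∨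
      (e ∈ C ∧ f e = fC e ∧ 1 ≤ f e ∧ f e ≤ t ∧ f e ∈ P) ∨
      (e ∈ EK ∧ f e = fK e ∧ t + 1 ≤ f e ∧ f e ≤ m + 3) := by
    intro e he
    by_cases h1 : e ∈ EK
    · have hnC : e ∉ C := fun h => (Finset.mem_sdiff.1 (hCsub h)).2 h1
      have hnH : e ∉ H := fun h => (Finset.mem_sdiff.1 (Finset.mem_sdiff.1 h).1).2 h1
      have hf : f e = fK e := by simp [f, fH0 e hnH, fC0 e hnC]
      right; right
      rw [hf]
      exact ⟨h1, rfl, fKr e h1⟩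
    · by_cases h2 : e ∈ C
      · have hnH : e ∉ H := fun h => (Finset.mem_sdiff.1 h).2 h2
        have hf : f e = fC e := by simp [f, fH0 e hnH, fK0 e h1]
        right; left
        rw [hf]
        have := fCr e h2
        have h3 := Finset.mem_Icc.1 (hPsub this)
        exact ⟨h2, rfl, h3.1, h3.2, this⟩
      · have hh : e ∈ H := Finset.mem_sdiff.2 ⟨Finset.mem_sdiff.2 ⟨he, h1⟩, h2⟩
        have hf : f e = fH e := by simp [f, fC0 e h2, fK0 e h1]
        left
        rw [hf]
        have := Finset.mem_sdiff.1 (fHmem e hh)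
        have h3 := Finset.mem_Icc.1 this.1
        exact ⟨hh, rfl, h3.1, h3.2, this.2⟩
  -- vertex sums
  have sumO : ∀ v ∈ O, ∑ x ∈ G.neighborFinset v, f s(v, x) = w v + (3 * idx v + 1) := by
    intro v hv
    have hvK := (memO v).1 hv
    simp only [f, Finset.sum_add_distrib]
    have h1 : ∑ x ∈ G.neighborFinset v, fK s(v, x) = 0 :=
      Finset.sum_eq_zero (fun x _ => fK0 _ (fun h => hvK ((memEK v x).1 h).1))
    have h2 : ∑ x ∈ G.neighborFinset v, fC s(v, x) = 3 * idx v + 1 := by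
      rw [Finset.sum_eq_single (c v), fCv v hv]
      · intro x _ hx
        apply fC0
        intro h
        obtain ⟨v', hv', h'⟩ := Finset.mem_image.1 h
        obtain ⟨rfl, h3⟩ := einj v' hv' v x hv h'.symm
        exact hx h3
      · intro h
        exact absurd ((SimpleGraph.mem_neighborFinset _ _ _).2 (hc v hvK).2) h
    rw [h1, h2, add_zero]
  have sumK : ∀ v ∈ K, ∑ x ∈ G.neighborFinset v, f s(v, x) =
      p (ν (κ v)) + ∑ j ∈ Finset.range K.card, g (κ v) j := by
    intro v hv
    rw [νκ v hv]
    have h1 : ∑ x ∈ G.neighborFinset v, fK s(v, x) = ∑ j ∈ Finset.range K.card, g (κ v) j := by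
      rw [← κim, Finset.sum_image (fun x hx y hy h => κinj hx hy h)]
      rw [← Finset.sum_erase_add K _ hv, g0, add_zero]
      have hsub : K.erase v ⊆ G.neighborFinset v := by
        intro x hx
        rw [Finset.mem_erase] at hx
        rw [SimpleGraph.mem_neighborFinset]
        exact hclique hv hx.2 hx.1.symm
      rw [← Finset.sum_subset hsub]
      · apply Finset.sum_congr rfl
        intro x hx
        rw [Finset.mem_erase] at hx
        exact fKv v hv x hx.2 hx.1.symm
      · intro x _ hx
        apply fK0
        intro h
        have := (memEK v x).1 h
        exact hx (Finset.mem_erase.2 ⟨this.2.2.symm, this.2.1⟩)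
    rw [← h1]
    simp only [f, p, Finset.sum_add_distrib]
  have ltK : ∀ i j, i < j → j < K.card → p (ν i) + ∑ l ∈ Finset.range K.card, g i l <
      p (ν j) + ∑ l ∈ Finset.range K.card, g j l := by
    intro i j hij
    induction j, hij using Nat.le_induction with
    | base => intro h; exact glt i h
    | succ j hj ih => intro h; exact (ih (by omega)).trans (glt j h)
  have avoid : ∀ v ∈ O, ∀ u ∈ K, ∑ x ∈ G.neighborFinset v, f s(v, x) ≠
      ∑ x ∈ G.neighborFinset u, f s(u, x) := by
    intro v hv u hu h
    rw [sumO v hv, sumK u hu] at h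
    exact gS (κ u) (κlt u hu) ⟨v, hv, h.symm⟩
  refine ⟨f, ?_, ?_, ?_⟩
  · intro e he e' he' heq
    rcases tri e (by simpa using he) with h | h | h <;>
      rcases tri e' (by simpa using he') with h' | h' | h'
    · exact fHinj h.1 h'.1 (by rw [← h.2.1, ← h'.2.1, heq])
    · exact absurd (heq ▸ h'.2.2.2.2) h.2.2.2.2
    · omega
    · exact absurd (heq ▸ h.2.2.2.2) h'.2.2.2.2
    · exact fCinj h.1 h'.1 (by rw [← h.2.1, ← h'.2.1, heq])
    · omega
    · omega
    · omega
    · exact fKinj h.1 h'.1 (by rw [← h.2.1, ← h'.2.1, heq])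
  · intro e he
    rw [Finset.mem_Icc]
    rcases tri e he with h | h | h <;> omega
  · intro v v' h
    simp only at h
    by_cases hv : v ∈ K <;> by_cases hv' : v' ∈ K
    · rw [sumK v hv, sumK v' hv'] at h
      rcases lt_trichotomy (κ v) (κ v') with hlt | heq | hlt
      · have := ltK _ _ hlt (κlt v' hv'); omega
      · exact κinj hv hv' heq
      · have := ltK _ _ hlt (κlt v hv); omega
    · exact absurd h.symm (avoid v' ((memO v').2 hv') v hv)
    · exact absurd h (avoid v ((memO v).2 hv) v' hv')
    · have hv := (memO v).2 hv
      have hv' := (memO v').2 hv'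
      rw [sumO v hv, sumO v' hv'] at h
      rcases lt_trichotomy (idx v) (idx v') with hlt | heq | hlt
      · have := hsep v hv v' hv' hlt; omega
      · exact idxinj hv hv' heq
      · have := hsep v' hv' v hv hlt; omega
end

section
/- Let G = (V,E) be a finite simple graph with n vertices and m edges having a dominating clique K of order 3 (a dominating triangle). If m ≥ 3(n−3) + 1, then G is 3-antimagic. -/
open Finset

theorem aux_rank {V : Type*} [DecidableEq V] (p : V → ℕ) (W : Finset V) :
    ∃ rk : V → ℕ, (∀ w ∈ W, rk w < W.card) ∧
      ∀ w ∈ W, ∀ w' ∈ W, w ≠ w' → (p w ≤ p w' ∧ rk w < rk w') ∨ (p w' ≤ p w ∧ rk w' < rk w) := by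
  induction W using Finset.induction_on_max_value p with
  | empty => exact ⟨fun _ => 0, by simp, by simp⟩
  | insert a s ha hmax ih =>
    obtain ⟨rk, h1, h2⟩ := ih
    refine ⟨Function.update rk a s.card, ?_, ?_⟩
    · intro w hw
      rw [Finset.card_insert_of_notMem ha]
      by_cases h : w = a
      · subst h; simp
      · have hw' : w ∈ s := by simpa [h] using hw
        have := h1 w hw'
        simp [Function.update_of_ne h]; omega
    · intro w hw w' hw' hne
      by_cases h : w = a
      · subst h
        have h' : w' ≠ w := fun h => hne h.symm
        have hs : w' ∈ s := by simpa [h'] using hw'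
        right
        simp [Function.update_of_ne h']
        exact ⟨hmax _ hs, h1 _ hs⟩
      · have hs : w ∈ s := by simpa [h] using hw
        by_cases h' : w' = a
        · subst h'
          left
          simp [Function.update_of_ne h]
          exact ⟨hmax _ hs, h1 _ hs⟩
        · have hs' : w' ∈ s := by simpa [h'] using hw'
          simp only [Function.update_of_ne h, Function.update_of_ne h']
          exact h2 w hs w' hs' hne

theorem aux_choice (P : ℕ → Prop) (hP : ∀ i j, P i → P j → i < j → i + 3 ≤ j) (A B C : ℕ) :
    ∃ x y z, x < y ∧ y < z ∧ z ≤ 5 ∧ ¬ P (A + x + y) ∧ ¬ P (B + x + z) ∧ ¬ P (C + y + z) := by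
  have key : ∀ A : ℕ, ¬ (P A ∧ P (A+1)) ∧ ¬ (P A ∧ P (A+2)) ∧ ¬ (P (A+1) ∧ P (A+2)) := by
    intro A
    refine ⟨fun h => ?_, fun h => ?_, fun h => ?_⟩
    · have := hP _ _ h.1 h.2 (by omega); omega
    · have := hP _ _ h.1 h.2 (by omega); omega
    · have := hP _ _ h.1 h.2 (by omega); omega
  have kA := key (A+2)
  have kB := key (B+4)
  have kC := key (C+6)
  by_contra hcon
  have h1 := fun h => hcon ⟨0, 2, 4, by omega, by omega, by omega, h⟩
  have h2 := fun h => hcon ⟨0, 2, 5, by omega, by omega, by omega, h⟩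
  have h3 := fun h => hcon ⟨0, 3, 4, by omega, by omega, by omega, h⟩
  have h4 := fun h => hcon ⟨1, 2, 4, by omega, by omega, by omega, h⟩
  have h5 := fun h => hcon ⟨1, 3, 5, by omega, by omega, by omega, h⟩
  simp only [add_assoc, Nat.reduceAdd] at *
  clear hcon key hP
  grind

theorem aux_order {V : Type*} [DecidableEq V] (K : Finset V) (hcard : K.card = 3) (A : V → ℕ) :
    ∃ a b c, a ≠ b ∧ a ≠ c ∧ b ≠ c ∧ K = {a, b, c} ∧ A a ≤ A b ∧ A b ≤ A c := by
  obtain ⟨x, y, z, hxy, hxz, hyz, rfl⟩ := Finset.card_eq_three.1 hcard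
  rcases le_total (A x) (A y) with h1 | h1 <;> rcases le_total (A x) (A z) with h2 | h2 <;>
    rcases le_total (A y) (A z) with h3 | h3
  · exact ⟨x, y, z, hxy, hxz, hyz, rfl, h1, h3⟩
  · exact ⟨x, z, y, hxz, hxy, hyz.symm, by ext; simp; tauto, h2, h3⟩
  · exact ⟨x, y, z, hxy, hxz, hyz, rfl, h1, h3⟩
  · exact ⟨z, x, y, hxz.symm, hyz.symm, hxy, by ext; simp; tauto, h2, h1⟩
  · exact ⟨y, x, z, hxy.symm, hyz, hxz, by ext; simp; tauto, h1, h2⟩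
  · exact ⟨z, y, x, hyz.symm, hxz.symm, hxy.symm, by ext; simp; tauto, h3, h1⟩
  · exact ⟨y, z, x, hyz, hxy.symm, hxz.symm, by ext; simp; tauto, h3, h2⟩
  · exact ⟨z, y, x, hyz.symm, hxz.symm, hxy.symm, by ext; simp; tauto, h3, h1⟩

theorem aux_partial {V : Type*} [Fintype V] [DecidableEq V]
    (G : SimpleGraph V) [DecidableRel G.Adj] (K : Finset V)
    (hclique : G.IsClique ↑K) (hcard : K.card = 3)
    (hdom : ∀ v ∉ K, ∃ u ∈ K, G.Adj v u)
    (hm : 3 * ((Fintype.card V : ℤ) - 3) + 1 ≤ (G.edgeFinset.card : ℤ)) :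
    3 ≤ G.edgeFinset.card ∧ ∃ f : Sym2 V → ℕ,
      (∀ e ∈ G.edgeFinset, ∀ e' ∈ G.edgeFinset, ¬ (∀ v ∈ e, v ∈ K) → ¬ (∀ v ∈ e', v ∈ K) →
        f e = f e' → e = e') ∧
      (∀ e ∈ G.edgeFinset, ¬ (∀ v ∈ e, v ∈ K) → 1 ≤ f e ∧ f e + 3 ≤ G.edgeFinset.card) ∧
      ∀ w ∉ K, ∀ w' ∉ K, w ≠ w' →
        (∑ v ∈ G.neighborFinset w, f s(w, v)) + 3 ≤ ∑ v ∈ G.neighborFinset w', f s(w', v) ∨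
        (∑ v ∈ G.neighborFinset w', f s(w', v)) + 3 ≤ ∑ v ∈ G.neighborFinset w, f s(w, v) := by
  obtain ⟨a, b, c, hab, hac, hbc, hK⟩ := Finset.card_eq_three.1 hcard
  have : Nonempty V := ⟨a⟩
  set W := Kᶜ with hW
  have hWc : W.card + 3 = Fintype.card V := by
    rw [hW, Finset.card_compl]; have := K.card_le_univ; omega
  set m := G.edgeFinset.card with hmdef
  choose! g hgK hgA using hdom
  set sp : V → Sym2 V := fun w => s(w, g w) with hsp
  have hinj : Set.InjOn sp (W : Set V) := by
    intro w hw w' hw' h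
    simp only [hW, Finset.coe_compl, Set.mem_compl_iff, Finset.mem_coe] at hw hw'
    simp only [hsp, Sym2.eq_iff] at h
    rcases h with h | h
    · exact h.1
    · exact absurd (h.1 ▸ hgK w' hw') hw
  set S := W.image sp with hS
  set T : Finset (Sym2 V) := {s(a,b), s(a,c), s(b,c)} with hT
  have hTK : ∀ e ∈ G.edgeFinset, (e ∈ T ↔ ∀ v ∈ e, v ∈ K) := by
    intro e he
    induction e using Sym2.ind with
    | _ u v =>
      have huv : u ≠ v := by
        rw [SimpleGraph.mem_edgeFinset] at he
        exact G.ne_of_adj he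
      simp only [hT, hK, Finset.mem_insert, Finset.mem_singleton, Sym2.eq_iff, Sym2.mem_iff]
      constructor
      · rintro h w (rfl | rfl) <;> tauto
      · intro h
        have h1 := h u (Or.inl rfl)
        have h2 := h v (Or.inr rfl)
        rcases h1 with rfl | rfl | rfl <;> rcases h2 with rfl | rfl | rfl <;> simp_all
  have hTc : T.card = 3 := by
    rw [hT, Finset.card_eq_three]
    refine ⟨_, _, _, ?_, ?_, ?_, rfl⟩ <;> simp only [ne_eq, Sym2.eq_iff] <;> tauto
  have hadj : ∀ u ∈ K, ∀ v ∈ K, u ≠ v → G.Adj u v := fun u hu v hv h => hclique hu hv h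
  have hTE : T ⊆ G.edgeFinset := by
    intro e he
    simp only [hT, Finset.mem_insert, Finset.mem_singleton] at he
    rcases he with rfl | rfl | rfl <;> rw [SimpleGraph.mem_edgeFinset, SimpleGraph.mem_edgeSet] <;>
      apply hadj <;> simp_all
  have hSE : S ⊆ G.edgeFinset := by
    intro e he
    obtain ⟨w, hw, rfl⟩ := Finset.mem_image.1 he
    rw [SimpleGraph.mem_edgeFinset]
    exact hgA w (by simpa [hW] using hw)
  have hST : Disjoint S T := by
    rw [Finset.disjoint_left]
    intro e he het
    have h := (hTK e (hSE he)).1 het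
    obtain ⟨w, hw, rfl⟩ := Finset.mem_image.1 he
    have := h w (by simp [hsp])
    simp [hW] at hw
    exact hw this
  have hSc : S.card = W.card := Finset.card_image_of_injOn hinj
  set H := G.edgeFinset \ (S ∪ T) with hH
  have hHc : H.card + W.card + 3 = m := by
    have h1 := Finset.card_sdiff_add_card_eq_card (Finset.union_subset hSE hTE)
    rw [Finset.card_union_of_disjoint hST] at h1
    rw [hH]; omega
  set D := (Finset.range W.card).image (fun i => 3 * i + 1) with hD
  have hDc : D.card = W.card := by
    rw [hD, Finset.card_image_of_injective _ (fun i j h => by simpa using h), Finset.card_range]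
  have hDs : D ⊆ Finset.Icc 1 (m-3) := by
    intro i hi
    simp only [hD, Finset.mem_image, Finset.mem_range] at hi
    obtain ⟨j, hj, rfl⟩ := hi
    rw [Finset.mem_Icc]; omega
  have hQc : H.card ≤ (Finset.Icc 1 (m-3) \ D).card := by
    have h1 := Finset.card_sdiff_add_card_eq_card hDs
    rw [Nat.card_Icc] at h1
    omega
  obtain ⟨h, hhm, hhi⟩ : ∃ h : Sym2 V → ℕ, (∀ e ∈ H, h e ∈ Finset.Icc 1 (m-3) \ D) ∧
      Set.InjOn h (H : Set (Sym2 V)) := by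
    obtain ⟨h, h1, h2⟩ := Finset.exists_subset_card_eq hQc
    obtain ⟨φ⟩ := Fintype.card_eq.1 (show Fintype.card H = Fintype.card h by simp [h2])
    refine ⟨fun e => if he : e ∈ H then (φ ⟨e, he⟩ : ℕ) else 0, ?_, ?_⟩
    · intro e he
      simp only [he, dite_true]
      exact h1 (φ ⟨e, he⟩).2
    · intro e he e' he' hh
      have he1 : e ∈ H := he
      have he1' : e' ∈ H := he'
      simp only [he1, he1', dite_true] at hh
      have := φ.injective (Subtype.ext hh)
      simpa using this
  obtain ⟨rk, hrk1, hrk2⟩ := aux_rank (fun w => ∑ v ∈ (G.neighborFinset w).erase (g w), h s(w, v)) W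
  set inv := Function.invFunOn sp (W : Set V) with hinv
  have hinvl : ∀ w ∈ W, inv (sp w) = w := fun w hw => hinj.leftInvOn_invFunOn hw
  set f : Sym2 V → ℕ := fun e => if e ∈ S then 3 * rk (inv e) + 1 else h e with hf
  have hfS : ∀ w ∈ W, f (sp w) = 3 * rk w + 1 := by
    intro w hw
    have : sp w ∈ S := Finset.mem_image_of_mem _ hw
    simp only [hf, this, if_true, hinvl w hw]
  have hfD : ∀ e ∈ S, f e ∈ D := by
    intro e he
    obtain ⟨w, hw, rfl⟩ := Finset.mem_image.1 he
    rw [hfS w hw, hD]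
    exact Finset.mem_image.2 ⟨rk w, Finset.mem_range.2 (hrk1 w hw), rfl⟩
  have hfH : ∀ e ∉ S, f e = h e := fun e he => by simp only [hf, he, if_false]
  have hrki : ∀ w ∈ W, ∀ w' ∈ W, rk w = rk w' → w = w' := by
    intro w hw w' hw' hh
    by_contra hne
    have := hrk2 w hw w' hw' hne
    omega
  have hmemH : ∀ e ∈ G.edgeFinset, ¬ (∀ v ∈ e, v ∈ K) → e ∉ S → e ∈ H := by
    intro e he hk hs
    rw [← hTK e he] at hk
    simp [hH, hs, hk]
    simpa using he
  refine ⟨by omega, f, ?_, ?_, ?_⟩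
  · intro e he e' he' hk hk' hee
    by_cases h1 : e ∈ S <;> by_cases h2 : e' ∈ S
    · obtain ⟨w, hw, rfl⟩ := Finset.mem_image.1 h1
      obtain ⟨w', hw', rfl⟩ := Finset.mem_image.1 h2
      rw [hfS w hw, hfS w' hw'] at hee
      rw [hrki w hw w' hw' (by omega)]
    · have h3 := hhm e' (hmemH e' he' hk' h2)
      rw [← hfH _ h2, ← hee] at h3
      exact absurd (hfD e h1) (Finset.mem_sdiff.1 h3).2
    · have h3 := hhm e (hmemH e he hk h1)
      rw [← hfH _ h1, hee] at h3
      exact absurd (hfD e' h2) (Finset.mem_sdiff.1 h3).2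
    · rw [hfH _ h1, hfH _ h2] at hee
      exact hhi (hmemH e he hk h1) (hmemH e' he' hk' h2) hee
  · intro e he hk
    have : f e ∈ Finset.Icc 1 (m-3) := by
      by_cases h1 : e ∈ S
      · exact hDs (hfD e h1)
      · rw [hfH e h1]
        exact (Finset.mem_sdiff.1 (hhm e (hmemH e he hk h1))).1
    rw [Finset.mem_Icc] at this
    omega
  · have hsum : ∀ w ∉ K, ∑ v ∈ G.neighborFinset w, f s(w, v) =
        (∑ v ∈ (G.neighborFinset w).erase (g w), h s(w, v)) + (3 * rk w + 1) := by
      intro w hw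
      have hgm : g w ∈ G.neighborFinset w := by
        rw [SimpleGraph.mem_neighborFinset]; exact hgA w hw
      rw [← Finset.sum_erase_add _ _ hgm]
      congr 1
      · apply Finset.sum_congr rfl
        intro v hv
        apply hfH
        intro hmem
        obtain ⟨w', hw', he⟩ := Finset.mem_image.1 hmem
        have hw'' : w' ∉ K := by simpa [hW] using hw'
        simp only [hsp, Sym2.eq_iff] at he
        rcases he with ⟨rfl, h2⟩ | ⟨h1, h2⟩
        · exact (Finset.mem_erase.1 hv).1 h2.symm
        · exact hw (h2 ▸ hgK w' hw'')
      · exact hfS w (by simpa [hW] using hw)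
    intro w hw w' hw' hne
    rw [hsum w hw, hsum w' hw']
    have := hrk2 w (by simpa [hW] using hw) w' (by simpa [hW] using hw') hne
    omega

theorem aux_case {V : Type*} [Fintype V] [DecidableEq V]
    (G : SimpleGraph V) [DecidableRel G.Adj] (K : Finset V) (a b c : V) (hK : K = {a, b, c}) :
    ∀ e ∈ G.edgeFinset, e = s(a,b) ∨ e = s(a,c) ∨ e = s(b,c) ∨ ¬ (∀ v ∈ e, v ∈ K) := by
  intro e he
  by_cases hk : ∀ v ∈ e, v ∈ K
  · induction e using Sym2.ind with
    | _ u v =>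
      have huv : u ≠ v := by
        rw [SimpleGraph.mem_edgeFinset] at he
        exact G.ne_of_adj he
      have h1 := hk u (by simp)
      have h2 := hk v (by simp)
      clear hk he
      simp only [hK, Finset.mem_insert, Finset.mem_singleton] at h1 h2
      simp only [Sym2.eq_iff]
      rcases h1 with rfl | rfl | rfl <;> rcases h2 with rfl | rfl | rfl <;> simp_all
  · tauto

set_option maxHeartbeats 1000000 in
/-- If a graph `G` with `n` vertices and `m` edges has a dominating triangle (a
dominating clique of order `3`) and `m ≥ 3(n - 3) + 1`, then `G` is `3`-antimagic. -/
theorem three_antimagic_of_dominating_triangle {V : Type*} [Fintype V] [DecidableEq V]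
    (G : SimpleGraph V) [DecidableRel G.Adj] (K : Finset V)
    (hclique : G.IsClique ↑K) (hcard : K.card = 3)
    (hdom : ∀ v ∉ K, ∃ u ∈ K, G.Adj v u)
    (hm : 3 * ((Fintype.card V : ℤ) - 3) + 1 ≤ (G.edgeFinset.card : ℤ)) :
    IsCAntimagic G 3 := by
  obtain ⟨hm3, f, hfi, hfr, hfw⟩ := aux_partial G K hclique hcard hdom hm
  obtain ⟨a, b, c, hab, hac, hbc, hK, hAB, hBC⟩ :=
    aux_order K hcard (fun u => ∑ v ∈ G.neighborFinset u \ K, f s(u, v))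
  set m := G.edgeFinset.card with hmdef
  set A : V → ℕ := fun u => ∑ v ∈ G.neighborFinset u \ K, f s(u, v) with hA
  have haK : a ∈ K := by simp [hK]
  have hbK : b ∈ K := by simp [hK]
  have hcK : c ∈ K := by simp [hK]
  obtain ⟨x, y, z, hxy, hyz, hz, hPa, hPb, hPc⟩ := aux_choice
    (fun i => ∃ w ∉ K, ∑ v ∈ G.neighborFinset w, f s(w, v) = i)
    (by
      rintro i j ⟨w, hw, rfl⟩ ⟨w', hw', rfl⟩ hij
      have hne : w ≠ w' := by rintro rfl; omega
      have := hfw w hw w' hw' hne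
      omega)
    (A a + 2 * (m - 2)) (A b + 2 * (m - 2)) (A c + 2 * (m - 2))
  set F : Sym2 V → ℕ := fun e => if e = s(a,b) then m - 2 + x else if e = s(a,c) then m - 2 + y
    else if e = s(b,c) then m - 2 + z else f e with hF
  have hF1 : F s(a,b) = m - 2 + x := by simp [hF]
  have hF2 : F s(a,c) = m - 2 + y := by
    have h1 : s(a,c) ≠ s(a,b) := by simp only [ne_eq, Sym2.eq_iff]; tauto
    simp only [hF, h1, if_true, if_false]
  have hF3 : F s(b,c) = m - 2 + z := by
    have h1 : s(b,c) ≠ s(a,b) := by simp only [ne_eq, Sym2.eq_iff]; tauto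
    have h2 : s(b,c) ≠ s(a,c) := by simp only [ne_eq, Sym2.eq_iff]; tauto
    simp only [hF, h1, h2, if_true, if_false]
  have hF4 : ∀ e, ¬ (∀ v ∈ e, v ∈ K) → F e = f e := by
    intro e he
    have h1 : e ≠ s(a,b) := by rintro rfl; apply he; simp [haK, hbK]
    have h2 : e ≠ s(a,c) := by rintro rfl; apply he; simp [haK, hcK]
    have h3 : e ≠ s(b,c) := by rintro rfl; apply he; simp [hcK, hbK]
    simp only [hF, h1, h2, h3, if_false]
  have hcase := aux_case G K a b c hK
  have hsW : ∀ w ∉ K, ∑ v ∈ G.neighborFinset w, F s(w, v) =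
      ∑ v ∈ G.neighborFinset w, f s(w, v) := by
    intro w hw
    apply Finset.sum_congr rfl
    intro v _
    apply hF4
    intro hh
    exact hw (hh w (by simp))
  have hsK : ∀ u ∈ K, ∀ p q, p ≠ q → K.erase u = {p, q} →
      ∑ v ∈ G.neighborFinset u, F s(u, v) = A u + (F s(u, p) + F s(u, q)) := by
    intro u hu p q hpq he
    have hsub : K.erase u ⊆ G.neighborFinset u := by
      intro v hv
      rw [SimpleGraph.mem_neighborFinset]
      exact hclique hu (Finset.mem_of_mem_erase hv) (Finset.ne_of_mem_erase hv).symm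
    rw [← Finset.sum_sdiff hsub, he, Finset.sum_pair hpq, ← he]
    congr 1
    have : G.neighborFinset u \ K.erase u = G.neighborFinset u \ K := by
      ext v
      simp only [Finset.mem_sdiff, Finset.mem_erase, SimpleGraph.mem_neighborFinset]
      constructor
      · rintro ⟨h1, h2⟩
        exact ⟨h1, fun h => h2 ⟨(G.ne_of_adj h1).symm, h⟩⟩
      · rintro ⟨h1, h2⟩
        exact ⟨h1, fun h => h2 h.2⟩
    rw [this, hA]
    apply Finset.sum_congr rfl
    intro v hv
    apply hF4
    intro hh
    exact (Finset.mem_sdiff.1 hv).2 (hh v (by simp))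
  have hsa := hsK a haK b c hbc (by ext v; simp [hK]; grind)
  have hsb := hsK b hbK a c hac (by ext v; simp [hK]; grind)
  have hsc := hsK c hcK a b hab (by ext v; simp [hK]; grind)
  rw [hF1, hF2] at hsa
  rw [Sym2.eq_swap (a := b) (b := a), hF1, hF3] at hsb
  rw [Sym2.eq_swap (a := c) (b := a), Sym2.eq_swap (a := c) (b := b), hF2, hF3] at hsc
  have hAB' : A a ≤ A b := hAB
  have hBC' : A b ≤ A c := hBC
  refine ⟨F, ?_, ?_, ?_⟩
  · intro e he e' he' hee
    have he1 : e ∈ G.edgeFinset := he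
    have he1' : e' ∈ G.edgeFinset := he'
    have r := hfr e he1
    have r' := hfr e' he1'
    rcases hcase e he1 with h | h | h | h <;> rcases hcase e' he1' with h' | h' | h' | h' <;>
      first
      | (rw [h, h']; done)
      | (exfalso
         first
         | rw [h] at hee
         | (rw [hF4 e h] at hee; have r1 := r h)
         first
         | rw [h'] at hee
         | (rw [hF4 e' h'] at hee; have r2 := r' h')
         simp only [hF1, hF2, hF3] at hee
         omega)
      | (rw [hF4 e h, hF4 e' h'] at hee
         exact hfi e he1 e' he1' h h' hee)
  · intro e he
    rw [Finset.mem_Icc]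
    rcases hcase e he with h | h | h | h
    · rw [h, hF1]; omega
    · rw [h, hF2]; omega
    · rw [h, hF3]; omega
    · have := hfr e he h
      rw [hF4 e h]; omega
  · have hKW : ∀ u ∈ K, ∀ w ∉ K, ∑ v ∈ G.neighborFinset u, F s(u, v) ≠
        ∑ v ∈ G.neighborFinset w, F s(w, v) := by
      intro u hu w hw h
      rw [hsW w hw] at h
      rw [hK] at hu
      simp only [Finset.mem_insert, Finset.mem_singleton] at hu
      rcases hu with rfl | rfl | rfl
      · exact hPa ⟨w, hw, by omega⟩
      · exact hPb ⟨w, hw, by omega⟩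
      · exact hPc ⟨w, hw, by omega⟩
    intro u u' huu
    simp only at huu
    by_cases hu : u ∈ K <;> by_cases hu' : u' ∈ K
    · rw [hK] at hu hu'
      simp only [Finset.mem_insert, Finset.mem_singleton] at hu hu'
      rcases hu with rfl | rfl | rfl <;> rcases hu' with rfl | rfl | rfl <;>
        first
        | rfl
        | (exfalso; omega)
    · exact absurd huu (hKW u hu u' hu')
    · exact absurd huu.symm (hKW u' hu' u hu)
    · by_contra hne
      rw [hsW u hu, hsW u' hu'] at huu
      have := hfw u hu u' hu' hne
      omega
end

section
/- Let G = (V,E) be a finite simple graph with n vertices and m edges having a dominating clique K of order 4. If m ≥ 3(n−4) + 4, then G is 3-antimagic. -/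
open Finset

set_option linter.unusedSimpArgs false

theorem aux_num : ∀ b1 b2 b3 b4 : Fin 3, ∃ t ∈ ([(1, 2, 8, 9, 4, 7), (1, 2, 9, 8, 4, 7),
    (1, 3, 6, 5, 7, 8), (1, 4, 5, 6, 8, 7), (2, 1, 9, 8, 5, 7), (1, 3, 6, 7, 5, 8),
    (1, 3, 8, 9, 5, 6), (1, 4, 6, 5, 8, 7), (1, 2, 8, 9, 5, 6), (1, 2, 8, 9, 5, 7),
    (1, 4, 5, 6, 7, 8), (1, 6, 3, 4, 9, 7)] : List (ℕ × ℕ × ℕ × ℕ × ℕ × ℕ)),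
    t.1 + t.2.1 + t.2.2.1 ≠ 10 + b1.1 ∧
    t.1 + t.2.2.2.1 + t.2.2.2.2.1 ≠ 13 + b2.1 ∧
    t.2.1 + t.2.2.2.1 + t.2.2.2.2.2 ≠ 16 + b3.1 ∧
    t.2.2.1 + t.2.2.2.2.1 + t.2.2.2.2.2 ≠ 19 + b4.1 := by
  decide

theorem aux_block (S : ℕ → Prop) (hS : ∀ x y, S x → S y → x < y → x + 3 ≤ y) (x : ℕ) :
    ∃ b : Fin 3, ∀ y, x ≤ y → y < x + 3 → y ≠ x + b.1 → ¬ S y := by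
  by_cases h : ∃ b : Fin 3, S (x + b.1)
  · obtain ⟨b, hb⟩ := h
    refine ⟨b, fun y h1 h2 h3 h4 => ?_⟩
    have hb3 := b.2
    rcases lt_or_gt_of_ne h3 with h | h
    · have := hS _ _ h4 hb h
      omega
    · have := hS _ _ hb h4 h
      omega
  · refine ⟨0, fun y h1 h2 _ h4 => h ⟨⟨y - x, by omega⟩, ?_⟩⟩
    have : x + (y - x) = y := by omega
    simpa [this] using h4

theorem aux_K (S : ℕ → Prop) (hS : ∀ x y, S x → S y → x < y → x + 3 ≤ y)
    (p1 p2 p3 p4 : ℕ) (h12 : p1 ≤ p2) (h23 : p2 ≤ p3) (h34 : p3 ≤ p4) :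
    ∃ ab ac ad bc bd cd : ℕ,
      [ab, ac, ad, bc, bd, cd].Nodup ∧ (∀ x ∈ [ab, ac, ad, bc, bd, cd], 1 ≤ x ∧ x ≤ 9) ∧
      ¬ S (p1 + (ab + ac + ad)) ∧ ¬ S (p2 + (ab + bc + bd)) ∧
      ¬ S (p3 + (ac + bc + cd)) ∧ ¬ S (p4 + (ad + bd + cd)) ∧
      p1 + (ab + ac + ad) < p2 + (ab + bc + bd) ∧
      p2 + (ab + bc + bd) < p3 + (ac + bc + cd) ∧
      p3 + (ac + bc + cd) < p4 + (ad + bd + cd) := by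
  obtain ⟨b1, hb1⟩ := aux_block S hS (p1 + 10)
  obtain ⟨b2, hb2⟩ := aux_block S hS (p2 + 13)
  obtain ⟨b3, hb3⟩ := aux_block S hS (p3 + 16)
  obtain ⟨b4, hb4⟩ := aux_block S hS (p4 + 19)
  obtain ⟨⟨ab, ac, ad, bc, bd, cd⟩, ht, n1, n2, n3, n4⟩ := aux_num b1 b2 b3 b4
  dsimp only at n1 n2 n3 n4
  have key : [ab, ac, ad, bc, bd, cd].Nodup ∧ (∀ x ∈ [ab, ac, ad, bc, bd, cd], 1 ≤ x ∧ x ≤ 9) ∧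
      (10 ≤ ab + ac + ad ∧ ab + ac + ad < 13) ∧ (13 ≤ ab + bc + bd ∧ ab + bc + bd < 16) ∧
      (16 ≤ ac + bc + cd ∧ ac + bc + cd < 19) ∧ (19 ≤ ad + bd + cd ∧ ad + bd + cd < 22) := by
    simp only [List.mem_cons, Prod.mk.injEq, List.not_mem_nil, or_false] at ht
    rcases ht with ht | ht | ht | ht | ht | ht | ht | ht | ht | ht | ht | ht <;>
    · obtain ⟨rfl, rfl, rfl, rfl, rfl, rfl⟩ := ht
      decide
  obtain ⟨k1, k2, ⟨k3, k4⟩, ⟨k5, k6⟩, ⟨k7, k8⟩, k9, k10⟩ := key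
  refine ⟨ab, ac, ad, bc, bd, cd, k1, k2, hb1 _ ?_ ?_ ?_, hb2 _ ?_ ?_ ?_, hb3 _ ?_ ?_ ?_,
    hb4 _ ?_ ?_ ?_, ?_, ?_, ?_⟩ <;> omega

theorem aux_sort {V : Type*} [DecidableEq V] (T : Finset V) (w : V → ℕ) :
    ∃ r : Fin T.card ≃ T, Monotone (fun i => w (r i)) := by
  let e := T.equivFin.symm
  refine ⟨(Tuple.sort (fun i => w (e i))).trans e, ?_⟩
  exact Tuple.monotone_sort (fun i => w (e i))

theorem aux_sum {V : Type*} [Fintype V] [DecidableEq V] (G : SimpleGraph V)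
    [DecidableRel G.Adj] (f : Sym2 V → ℕ) (u : V) :
    ∑ v ∈ G.neighborFinset u, f s(u, v) = ∑ e ∈ G.edgeFinset, if u ∈ e then f e else 0 := by
  rw [← Finset.sum_filter]
  have : G.edgeFinset.filter (fun e => u ∈ e) = (G.neighborFinset u).image (fun v => s(u, v)) := by
    ext e
    induction e with
    | h x y =>
      simp only [mem_filter, SimpleGraph.mem_edgeFinset, SimpleGraph.mem_edgeSet, Sym2.mem_iff,
        mem_image, SimpleGraph.mem_neighborFinset]
      constructor
      · rintro ⟨h, rfl | rfl⟩
        · exact ⟨y, h, rfl⟩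
        · exact ⟨x, h.symm, Sym2.eq_swap⟩
      · rintro ⟨v, hv, he⟩
        rcases Sym2.eq_iff.1 he with ⟨rfl, rfl⟩ | ⟨rfl, rfl⟩
        · exact ⟨hv, Or.inl rfl⟩
        · exact ⟨hv.symm, Or.inr rfl⟩
  rw [this, Finset.sum_image]
  intro x _ y _ h
  exact Sym2.congr_right.1 h

set_option maxHeartbeats 2000000 in
/-- The combinatorial core, with the edge set split in three parts. -/
theorem aux_main {V : Type*} [Fintype V] [DecidableEq V]
    (E R : Finset (Sym2 V)) (a0 : Fin 4 → V) (ha0 : Function.Injective a0)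
    (T : Finset V) (hT : ∀ v, v ∈ T ↔ v ∉ Set.range a0)
    (ev : V → Sym2 V) (hev : ∀ v ∈ T, ∀ u ∈ T, u ∈ ev v ↔ u = v)
    (hR : ∀ e ∈ R, (∀ v ∈ T, e ≠ ev v) ∧ ∀ i j, i ≠ j → e ≠ s(a0 i, a0 j))
    (hE : ∀ e, e ∈ E ↔ e ∈ R ∨ (∃ v ∈ T, e = ev v) ∨ ∃ i j, i ≠ j ∧ e = s(a0 i, a0 j))
    (M : ℕ) (hM : M = R.card + T.card + 9) (hM2 : 3 * T.card + 7 ≤ M) :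
    ∃ f : Sym2 V → ℕ, Set.InjOn f E ∧ (∀ e ∈ E, f e ∈ Finset.Icc 1 M) ∧
      Function.Injective fun u : V => ∑ e ∈ E, if u ∈ e then f e else 0 := by
  classical
  -- labels for R
  obtain ⟨g, hg1, hg2⟩ : ∃ g : Sym2 V → ℕ, Set.InjOn g R ∧
      ∀ e ∈ R, 10 ≤ g e ∧ g e ≤ M ∧ ∀ i < T.card, g e ≠ 10 + 3 * i := by
    let L := Finset.Icc 10 M \ (Finset.range T.card).image (fun i => 10 + 3 * i)
    have hL : L.card = R.card := by
      rw [Finset.card_sdiff_of_subset, Finset.card_image_of_injective]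
      · simp; omega
      · intro x y h
        simp at h
        exact h
      · intro x hx
        simp only [mem_image, mem_range] at hx
        obtain ⟨i, hi, rfl⟩ := hx
        simp only [mem_Icc]
        omega
    let q := Finset.equivOfCardEq hL.symm
    refine ⟨fun e => if h : e ∈ R then q ⟨e, h⟩ else 0, ?_, ?_⟩
    · intro x hx y hy hxy
      have hx' : x ∈ R := hx
      have hy' : y ∈ R := hy
      simp only [hx', hy', dif_pos] at hxy
      have := q.injective (Subtype.ext hxy)
      simpa using this
    · intro e he
      simp only [he, dif_pos]
      have := (q ⟨e, he⟩).2
      simp only [L, mem_sdiff, mem_Icc, mem_image, mem_range, not_exists, not_and] at this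
      exact ⟨this.1.1, this.1.2, fun i hi h => this.2 i hi h.symm⟩
  let w : V → ℕ := fun u => ∑ e ∈ R, if u ∈ e then g e else 0
  obtain ⟨r, hr⟩ := aux_sort T w
  let rk : V → ℕ := fun v => if h : v ∈ T then (r.symm ⟨v, h⟩).1 else 0
  have hrk_lt : ∀ v ∈ T, rk v < T.card := by
    intro v hv
    simp only [rk, hv, dif_pos]
    exact (r.symm ⟨v, hv⟩).2
  have hrk_inj : ∀ v ∈ T, ∀ u ∈ T, rk v = rk u → v = u := by
    intro v hv u hu h
    simp only [rk, hv, hu, dif_pos] at h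
    have := r.symm.injective (Fin.ext h)
    simpa using this
  have hrk_mono : ∀ v ∈ T, ∀ u ∈ T, rk v < rk u → w v ≤ w u := by
    intro v hv u hu h
    simp only [rk, hv, hu, dif_pos] at h
    have := hr (le_of_lt (Fin.lt_def.2 h))
    simpa using this
  let s : V → ℕ := fun v => w v + (10 + 3 * rk v)
  have hs : ∀ v ∈ T, ∀ u ∈ T, v ≠ u → s v + 3 ≤ s u ∨ s u + 3 ≤ s v := by
    intro v hv u hu hne
    have h0 : rk v ≠ rk u := fun h => hne (hrk_inj v hv u hu h)
    simp only [s]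
    rcases lt_or_gt_of_ne h0 with h | h
    · have := hrk_mono v hv u hu h
      omega
    · have := hrk_mono u hu v hv h
      omega
  -- sums at clique vertices
  let p : V → ℕ := fun u => w u + ∑ v ∈ T, if u ∈ ev v then 10 + 3 * rk v else 0
  have hpm := Tuple.monotone_sort (fun i => p (a0 i))
  let a : Fin 4 → V := fun i => a0 (Tuple.sort (fun i => p (a0 i)) i)
  have ha : Function.Injective a := ha0.comp (Equiv.injective _)
  have hpa : ∀ i j, i ≤ j → p (a i) ≤ p (a j) := fun i j h => hpm h
  have harange : ∀ i, ∃ j, a0 i = a j := fun i =>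
    ⟨(Tuple.sort (fun i => p (a0 i))).symm i, by simp [a]⟩
  have haT : ∀ i, a i ∉ T := fun i h => (hT _).1 h ⟨_, rfl⟩
  have hVT : ∀ v, v ∉ T → ∃ i, v = a i := by
    intro v hv
    by_contra hcon
    refine hv ((hT v).2 ?_)
    rintro ⟨i, rfl⟩
    exact hcon (harange i)
  have hKE : ∀ e, (∃ i j, i ≠ j ∧ e = s(a0 i, a0 j)) ↔ ∃ i j, i ≠ j ∧ e = s(a i, a j) := by
    intro e
    constructor
    · rintro ⟨i, j, hij, rfl⟩
      obtain ⟨i', hi⟩ := harange i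
      obtain ⟨j', hj⟩ := harange j
      refine ⟨i', j', ?_, by rw [hi, hj]⟩
      rintro rfl
      exact hij (ha0 (hi.trans hj.symm))
    · rintro ⟨i, j, hij, rfl⟩
      exact ⟨_, _, fun h => hij (ha (congrArg a0 h)), rfl⟩
  obtain ⟨ab, ac, ad, bc, bd, cd, k1, k2, q1, q2, q3, q4, o1, o2, o3⟩ :=
    aux_K (fun x => ∃ v ∈ T, s v = x) (by
      rintro _ _ ⟨v, hv, rfl⟩ ⟨u, hu, rfl⟩ h
      have hne : v ≠ u := by rintro rfl; omega
      have := hs v hv u hu hne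
      omega) (p (a 0)) (p (a 1)) (p (a 2)) (p (a 3))
      (hpa _ _ (by decide)) (hpa _ _ (by decide)) (hpa _ _ (by decide))
  let KE : Finset (Sym2 V) :=
    {s(a 0, a 1), s(a 0, a 2), s(a 0, a 3), s(a 1, a 2), s(a 1, a 3), s(a 2, a 3)}
  have hne : ∀ i j, i ≠ j → a i ≠ a j := fun i j h h' => h (ha h')
  have h01 := hne 0 1 (by decide)
  have h02 := hne 0 2 (by decide)
  have h03 := hne 0 3 (by decide)
  have h12 := hne 1 2 (by decide)
  have h13 := hne 1 3 (by decide)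
  have h23 := hne 2 3 (by decide)
  have hKEmem : ∀ e, e ∈ KE ↔ ∃ i j, i ≠ j ∧ e = s(a i, a j) := by
    intro e
    simp only [KE, mem_insert, mem_singleton]
    constructor
    · rintro (rfl | rfl | rfl | rfl | rfl | rfl)
      · exact ⟨0, 1, by decide, rfl⟩
      · exact ⟨0, 2, by decide, rfl⟩
      · exact ⟨0, 3, by decide, rfl⟩
      · exact ⟨1, 2, by decide, rfl⟩
      · exact ⟨1, 3, by decide, rfl⟩
      · exact ⟨2, 3, by decide, rfl⟩
    · rintro ⟨i, j, hij, rfl⟩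
      fin_cases i <;> fin_cases j <;> simp at hij ⊢
  let kl : Sym2 V → ℕ := fun e =>
    if e = s(a 0, a 1) then ab else if e = s(a 0, a 2) then ac else if e = s(a 0, a 3) then ad
    else if e = s(a 1, a 2) then bc else if e = s(a 1, a 3) then bd else cd
  have kl01 : kl s(a 0, a 1) = ab := by simp [kl]
  have kl02 : kl s(a 0, a 2) = ac := by simp [kl, h01, h02, h03, h12, h13, h23, h01.symm, h02.symm, h03.symm, h12.symm, h13.symm, h23.symm]
  have kl03 : kl s(a 0, a 3) = ad := by simp [kl, h01, h02, h03, h12, h13, h23, h01.symm, h02.symm, h03.symm, h12.symm, h13.symm, h23.symm]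
  have kl12 : kl s(a 1, a 2) = bc := by simp [kl, h01, h02, h03, h12, h13, h23, h01.symm, h02.symm, h03.symm, h12.symm, h13.symm, h23.symm]
  have kl13 : kl s(a 1, a 3) = bd := by simp [kl, h01, h02, h03, h12, h13, h23, h01.symm, h02.symm, h03.symm, h12.symm, h13.symm, h23.symm]
  have kl23 : kl s(a 2, a 3) = cd := by simp [kl, h01, h02, h03, h12, h13, h23, h01.symm, h02.symm, h03.symm, h12.symm, h13.symm, h23.symm]
  have hsumKE : ∀ h : Sym2 V → ℕ, ∑ e ∈ KE, h e = h s(a 0, a 1) + h s(a 0, a 2) + h s(a 0, a 3)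
      + h s(a 1, a 2) + h s(a 1, a 3) + h s(a 2, a 3) := by
    intro h
    simp only [KE]
    repeat rw [Finset.sum_insert (by simp [h01, h02, h03, h12, h13, h23, h01.symm, h02.symm, h03.symm, h12.symm, h13.symm, h23.symm])]
    rw [Finset.sum_singleton]
    ring
  have hkl_inj : Set.InjOn kl KE := by
    intro x hx y hy hxy
    simp only [KE, coe_insert, coe_singleton, Set.mem_insert_iff, Set.mem_singleton_iff] at hx hy
    simp only [List.nodup_cons, List.mem_cons, List.not_mem_nil, or_false, not_or] at k1
    rcases hx with rfl | rfl | rfl | rfl | rfl | rfl <;>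
    rcases hy with rfl | rfl | rfl | rfl | rfl | rfl <;>
    first
    | rfl
    | (exfalso; simp only [kl01, kl02, kl03, kl12, kl13, kl23] at hxy; omega)
  have hkl_le : ∀ e ∈ KE, 1 ≤ kl e ∧ kl e ≤ 9 := by
    intro e he
    apply k2
    simp only [KE, mem_insert, mem_singleton] at he
    rcases he with rfl | rfl | rfl | rfl | rfl | rfl <;>
      simp only [kl01, kl02, kl03, kl12, kl13, kl23] <;> simp
  -- the A part
  let A := T.image ev
  have hev_inj : Set.InjOn ev T := by
    intro u hu v hv h
    have := (hev u hu u hu).2 rfl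
    rw [h] at this
    exact (hev v hv u hu).1 this
  have hAKE : ∀ v ∈ T, ev v ∉ KE := by
    intro v hv h
    obtain ⟨i, j, _, hij⟩ := (hKEmem _).1 h
    have := (hev v hv v hv).2 rfl
    rw [hij, Sym2.mem_iff] at this
    rcases this with rfl | rfl
    · exact haT _ hv
    · exact haT _ hv
  have hRA : ∀ e ∈ R, e ∉ A := by
    intro e he h
    obtain ⟨v, hv, rfl⟩ := Finset.mem_image.1 h
    exact (hR _ he).1 v hv rfl
  have hRKE : ∀ e ∈ R, e ∉ KE := by
    intro e he h
    rw [hKEmem, ← hKE] at h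
    obtain ⟨i, j, hij, h⟩ := h
    exact (hR e he).2 i j hij h
  let al : Sym2 V → ℕ := fun e => if h : ∃ v ∈ T, ev v = e then 10 + 3 * rk h.choose else 0
  have hal : ∀ v ∈ T, al (ev v) = 10 + 3 * rk v := by
    intro v hv
    have h : ∃ u ∈ T, ev u = ev v := ⟨v, hv, rfl⟩
    have h2 := h.choose_spec
    simp only [al, h, dif_pos]
    rw [hev_inj h2.1 hv h2.2]
  let f : Sym2 V → ℕ := fun e => if e ∈ KE then kl e else if e ∈ A then al e else g e
  have fK : ∀ e ∈ KE, f e = kl e := fun e he => by simp [f, he]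
  have fA : ∀ v ∈ T, f (ev v) = 10 + 3 * rk v := fun v hv => by
    have : ev v ∈ A := Finset.mem_image_of_mem _ hv
    simp [f, hAKE v hv, this, hal v hv]
  have fR : ∀ e ∈ R, f e = g e := fun e he => by simp [f, hRKE e he, hRA e he]
  have hcases : ∀ e ∈ E, e ∈ R ∨ (∃ v ∈ T, e = ev v) ∨ e ∈ KE := by
    intro e he
    rw [hKEmem, ← hKE]
    exact (hE e).1 he
  have hEeq : E = (R ∪ A) ∪ KE := by
    ext e
    rw [hE, hKE, ← hKEmem]
    simp only [A, mem_union, mem_image, or_assoc, eq_comm]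
  have hsum : ∀ u, (∑ e ∈ E, if u ∈ e then f e else 0) =
      p u + ∑ e ∈ KE, if u ∈ e then kl e else 0 := by
    intro u
    rw [hEeq, Finset.sum_union, Finset.sum_union]
    · simp only [p, w]
      congr 1
      · congr 1
        · exact Finset.sum_congr rfl fun e he => by rw [fR e he]
        · rw [Finset.sum_image hev_inj]
          exact Finset.sum_congr rfl fun v hv => by rw [fA v hv]
      · exact Finset.sum_congr rfl fun e he => by rw [fK e he]
    · exact Finset.disjoint_left.2 hRA
    · rw [Finset.disjoint_left]
      intro e he
      rcases Finset.mem_union.1 he with he | he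
      · exact hRKE e he
      · obtain ⟨v, hv, rfl⟩ := Finset.mem_image.1 he
        exact hAKE v hv
  have hsT : ∀ u ∈ T, (∑ e ∈ E, if u ∈ e then f e else 0) = s u := by
    intro u hu
    rw [hsum]
    have h1 : (∑ e ∈ KE, if u ∈ e then kl e else 0) = 0 := by
      apply Finset.sum_eq_zero
      intro e he
      obtain ⟨i, j, _, rfl⟩ := (hKEmem e).1 he
      rw [if_neg]
      rw [Sym2.mem_iff]
      rintro (rfl | rfl)
      · exact haT _ hu
      · exact haT _ hu
    have h2 : (∑ v ∈ T, if u ∈ ev v then 10 + 3 * rk v else 0) = 10 + 3 * rk u := by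
      rw [Finset.sum_eq_single_of_mem u hu]
      · rw [if_pos ((hev u hu u hu).2 rfl)]
      · intro v hv hvu
        rw [if_neg]
        intro h
        exact hvu ((hev v hv u hu).1 h).symm
    simp only [p, s, h1, h2, add_zero]
  have s0 : (∑ e ∈ E, if a 0 ∈ e then f e else 0) = p (a 0) + (ab + ac + ad) := by
    rw [hsum, hsumKE]
    simp [kl01, kl02, kl03, kl12, kl13, kl23, h01, h02, h03, h12, h13, h23]
  have s1 : (∑ e ∈ E, if a 1 ∈ e then f e else 0) = p (a 1) + (ab + bc + bd) := by
    rw [hsum, hsumKE]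
    simp [kl01, kl02, kl03, kl12, kl13, kl23, h01.symm, h02, h03, h12, h13, h23]
  have s2 : (∑ e ∈ E, if a 2 ∈ e then f e else 0) = p (a 2) + (ac + bc + cd) := by
    rw [hsum, hsumKE]
    simp [kl01, kl02, kl03, kl12, kl13, kl23, h02.symm, h12.symm, h23]
  have s3 : (∑ e ∈ E, if a 3 ∈ e then f e else 0) = p (a 3) + (ad + bd + cd) := by
    rw [hsum, hsumKE]
    simp [kl01, kl02, kl03, kl12, kl13, kl23, h03.symm, h13.symm, h23.symm]
  refine ⟨f, ?_, ?_, ?_⟩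
  · intro x hx y hy hxy
    rcases hcases x hx with h1 | ⟨v, hv, rfl⟩ | h1 <;>
    rcases hcases y hy with h2 | ⟨u, hu, rfl⟩ | h2
    · rw [fR x h1, fR y h2] at hxy
      exact hg1 h1 h2 hxy
    · rw [fR x h1, fA u hu] at hxy
      exact absurd hxy ((hg2 x h1).2.2 _ (hrk_lt u hu))
    · rw [fR x h1, fK y h2] at hxy
      have := (hg2 x h1).1
      have := (hkl_le y h2).2
      omega
    · rw [fR y h2, fA v hv] at hxy
      exact absurd hxy.symm ((hg2 y h2).2.2 _ (hrk_lt v hv))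
    · rw [fA v hv, fA u hu] at hxy
      rw [hrk_inj v hv u hu (by omega)]
    · rw [fA v hv, fK y h2] at hxy
      have := (hkl_le y h2).2
      omega
    · rw [fR y h2, fK x h1] at hxy
      have := (hg2 y h2).1
      have := (hkl_le x h1).2
      omega
    · rw [fA u hu, fK x h1] at hxy
      have := (hkl_le x h1).2
      omega
    · rw [fK x h1, fK y h2] at hxy
      exact hkl_inj h1 h2 hxy
  · intro e he
    rw [Finset.mem_Icc]
    rcases hcases e he with h1 | ⟨v, hv, rfl⟩ | h1
    · rw [fR e h1]
      have := hg2 e h1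
      omega
    · rw [fA v hv]
      have := hrk_lt v hv
      omega
    · rw [fK e h1]
      have := hkl_le e h1
      omega
  · have hKT : ∀ i, ∀ v ∈ T, (∑ e ∈ E, if a i ∈ e then f e else 0) ≠ s v := by
      intro i v hv h
      have : i = 0 ∨ i = 1 ∨ i = 2 ∨ i = 3 := by omega
      rcases this with rfl | rfl | rfl | rfl
      · exact q1 ⟨v, hv, by rw [← s0, h]⟩
      · exact q2 ⟨v, hv, by rw [← s1, h]⟩
      · exact q3 ⟨v, hv, by rw [← s2, h]⟩
      · exact q4 ⟨v, hv, by rw [← s3, h]⟩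
    intro x y hxy
    dsimp only at hxy
    by_cases hx : x ∈ T <;> by_cases hy : y ∈ T
    · rw [hsT x hx, hsT y hy] at hxy
      by_contra hne
      have := hs x hx y hy hne
      omega
    · obtain ⟨i, rfl⟩ := hVT y hy
      rw [hsT x hx] at hxy
      exact absurd hxy.symm (hKT i x hx)
    · obtain ⟨i, rfl⟩ := hVT x hx
      rw [hsT y hy] at hxy
      exact absurd hxy (hKT i y hy)
    · obtain ⟨i, rfl⟩ := hVT x hx
      obtain ⟨j, rfl⟩ := hVT y hy
      have hi : i = 0 ∨ i = 1 ∨ i = 2 ∨ i = 3 := by omega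
      have hj : j = 0 ∨ j = 1 ∨ j = 2 ∨ j = 3 := by omega
      rcases hi with rfl | rfl | rfl | rfl <;> rcases hj with rfl | rfl | rfl | rfl <;>
      first
      | rfl
      | (exfalso; simp only [s0, s1, s2, s3] at hxy; omega)

/-- If a graph `G` with `n` vertices and `m` edges has a dominating clique of order `4`
and `m ≥ 3(n - 4) + 4`, then `G` is `3`-antimagic. -/
theorem three_antimagic_of_dominating_K4 {V : Type*} [Fintype V] [DecidableEq V]
    (G : SimpleGraph V) [DecidableRel G.Adj] (K : Finset V)
    (hclique : G.IsClique ↑K) (hcard : K.card = 4)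
    (hdom : ∀ v ∉ K, ∃ u ∈ K, G.Adj v u)
    (hm : 3 * ((Fintype.card V : ℤ) - 4) + 4 ≤ (G.edgeFinset.card : ℤ)) :
    IsCAntimagic G 3 := by
  classical
  choose! c hcK hcA using hdom
  let q : Fin 4 ≃ K := (K.equivFinOfCardEq hcard).symm
  let a0 : Fin 4 → V := fun i => q i
  have ha0 : Function.Injective a0 := fun i j h => q.injective (Subtype.ext h)
  have haK : ∀ i, a0 i ∈ K := fun i => (q i).2
  have hKa : ∀ v ∈ K, ∃ i, a0 i = v := fun v hv => ⟨q.symm ⟨v, hv⟩, by simp [a0]⟩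
  let A := (univ \ K).image (fun v => s(v, c v))
  let P : Finset (Sym2 V) := K.offDiag.image (fun x => s(x.1, x.2))
  let R := G.edgeFinset \ (A ∪ P)
  have hev : ∀ v ∈ univ \ K, ∀ u ∈ univ \ K, u ∈ s(v, c v) ↔ u = v := by
    intro v hv u hu
    simp only [mem_sdiff, mem_univ, true_and] at hv hu
    rw [Sym2.mem_iff]
    constructor
    · rintro (h | h)
      · exact h
      · exact absurd (h ▸ hcK v hv) hu
    · exact Or.inl
  have hA : A ⊆ G.edgeFinset := by
    intro e he
    obtain ⟨v, hv, rfl⟩ := Finset.mem_image.1 he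
    simp only [mem_sdiff, mem_univ, true_and] at hv
    simpa using hcA v hv
  have hPmem : ∀ e, e ∈ P ↔ ∃ i j, i ≠ j ∧ e = s(a0 i, a0 j) := by
    intro e
    simp only [P, mem_image, mem_offDiag, Prod.exists]
    constructor
    · rintro ⟨x, y, ⟨hx, hy, hxy⟩, rfl⟩
      obtain ⟨i, rfl⟩ := hKa x hx
      obtain ⟨j, rfl⟩ := hKa y hy
      exact ⟨i, j, fun h => hxy (by rw [h]), rfl⟩
    · rintro ⟨i, j, hij, rfl⟩
      exact ⟨_, _, ⟨haK i, haK j, fun h => hij (ha0 h)⟩, rfl⟩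
  have hP : P ⊆ G.edgeFinset := by
    intro e he
    obtain ⟨i, j, hij, rfl⟩ := (hPmem e).1 he
    simpa using hclique (haK i) (haK j) (fun h => hij (ha0 h))
  have hAP : Disjoint A P := by
    rw [Finset.disjoint_left]
    intro e he hp
    obtain ⟨v, hv, rfl⟩ := Finset.mem_image.1 he
    obtain ⟨i, j, hij, h⟩ := (hPmem _).1 hp
    simp only [mem_sdiff, mem_univ, true_and] at hv
    have : v ∈ s(v, c v) := by simp
    rw [h, Sym2.mem_iff] at this
    rcases this with h | h
    · exact hv (h ▸ haK i)
    · exact hv (h ▸ haK j)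
  have hAc : A.card = (univ \ K).card := by
    apply Finset.card_image_of_injOn
    intro u hu v hv h
    have h1 := (hev u hu u hu).2 rfl
    dsimp only at h
    rw [h] at h1
    exact (hev v hv u hu).1 h1
  have hPc : P.card = 6 := by
    have := Sym2.card_image_offDiag K
    rw [hcard] at this
    exact this
  have hTc : (univ \ K).card + 4 = Fintype.card V := by
    rw [← hcard, Finset.card_sdiff_add_card_eq_card (Finset.subset_univ K), Finset.card_univ]
  have hRc : R.card + ((univ \ K).card + 6) = G.edgeFinset.card := by
    rw [← hAc, ← hPc, ← Finset.card_union_of_disjoint hAP,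
      Finset.card_sdiff_add_card_eq_card (Finset.union_subset hA hP)]
  obtain ⟨f, h1, h2, h3⟩ := aux_main G.edgeFinset R a0 ha0 (univ \ K)
    (by
      intro v
      simp only [mem_sdiff, mem_univ, true_and, Set.mem_range]
      constructor
      · rintro h ⟨i, rfl⟩
        exact h (haK i)
      · intro h hv
        exact h (hKa v hv))
    (fun v => s(v, c v)) hev
    (by
      intro e he
      simp only [R, mem_sdiff, mem_union, not_or] at he
      refine ⟨fun v hv h => he.2.1 ?_, fun i j hij h => he.2.2 ((hPmem e).2 ⟨i, j, hij, h⟩)⟩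
      rw [h]
      exact Finset.mem_image_of_mem (fun v => s(v, c v)) hv)
    (by
      intro e
      rw [← hPmem]
      have : (∃ v ∈ univ \ K, e = s(v, c v)) ↔ e ∈ A := by
        simp only [A, mem_image, eq_comm]
      rw [this]
      simp only [R, mem_sdiff, mem_union]
      constructor
      · intro h
        tauto
      · rintro (h | h | h)
        · exact h.1
        · exact hA h
        · exact hP h)
    (G.edgeFinset.card + 3) (by omega) (by omega)
  refine ⟨f, h1, h2, ?_⟩
  simp only [aux_sum]
  exact h3
end

section
/- Let G = (V,E) be a finite simple graph with n vertices and m edges having a dominating clique K of order k = |K| ≥ 3, with m ≥ 3(n−k) − 2 + k(k−1)/2. Then there exists a bijective labelling f : E → {1,2,…,m} such that: (i) for any two distinct vertices v, v' ∈ V \ K, |σ(v) − σ(v')| ≥ 3, where σ(x) = Σ_{y : xy ∈ E} f(xy); and (ii) there is an ordering u_1, u_2, …, u_k of the vertices of K such that σ(u_{i+1}) − σ(u_i) ≥ k − 2 for every 1 ≤ i ≤ k − 1. -/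
open Finset

theorem aux_rank_s4 {α : Type*} [DecidableEq α] (S : Finset α) (φ : α → ℕ) :
    ∃ g : α → ℕ, Set.InjOn g ↑S ∧ (∀ a ∈ S, 1 ≤ g a ∧ g a ≤ S.card) ∧
      ∀ a ∈ S, ∀ b ∈ S, φ a < φ b → g a < g b := by
  induction S using Finset.induction_on_max_value φ with
  | empty => exact ⟨fun _ => 0, by simp⟩
  | insert a s ha hmax ih =>
    obtain ⟨g, h1, h2, h3⟩ := ih
    refine ⟨fun x => if x = a then s.card + 1 else g x, ?_, ?_, ?_⟩
    · intro x hx y hy hxy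
      simp only [Finset.coe_insert, Set.mem_insert_iff, Finset.mem_coe] at hx hy
      have := @h1 x
      have := h2 x
      have := h2 y
      have := @h1 x
      simp only [Finset.mem_coe] at this
      grind
    · intro x hx
      rw [Finset.card_insert_of_notMem ha]
      have := h2 x
      grind
    · intro x hx y hy hxy
      have := h3 x
      have := h2 x
      grind

theorem aux_bij {α β : Type*} [DecidableEq α] [Inhabited β] (S : Finset α) (T : Finset β)
    (h : S.card = T.card) : ∃ g : α → β, Set.InjOn g ↑S ∧ ∀ a ∈ S, g a ∈ T := by
  let e := Finset.equivOfCardEq h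
  refine ⟨fun a => if ha : a ∈ S then (e ⟨a, ha⟩ : β) else default, ?_, ?_⟩
  · intro x hx y hy hxy
    simp only [Finset.mem_coe] at hx hy
    simp only [hx, hy, dif_pos] at hxy
    have := e.injective (Subtype.ext hxy)
    simpa using this
  · intro a ha
    simp only [ha, dif_pos]
    exact (e ⟨a, ha⟩).2

/-- Let `G` be a graph with `n` vertices and `m` edges having a dominating clique `K` of
order `k ≥ 3`, with `m ≥ 3(n - k) - 2 + k(k-1)/2`. Then there is a bijective edge
labelling `f : E → {1, …, m}` such that:
(i) the vertex sums of any two distinct vertices outside `K` differ by at least `3`, and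
(ii) there is an ordering `u_1, …, u_k` of the vertices of `K` with
`σ(u_{i+1}) - σ(u_i) ≥ k - 2` for all `1 ≤ i ≤ k - 1`. -/
theorem exists_labelling_with_gaps {V : Type*} [Fintype V] [DecidableEq V]
    (G : SimpleGraph V) [DecidableRel G.Adj] (K : Finset V)
    (hclique : G.IsClique ↑K) (hcard : 3 ≤ K.card)
    (hdom : ∀ v ∉ K, ∃ u ∈ K, G.Adj v u)
    (hm : 3 * ((Fintype.card V : ℤ) - K.card) - 2 + K.card * (K.card - 1) / 2
        ≤ (G.edgeFinset.card : ℤ)) :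
    ∃ f : Sym2 V → ℕ,
      Set.BijOn f ↑G.edgeFinset ↑(Finset.Icc 1 G.edgeFinset.card) ∧
      (∀ v ∉ K, ∀ v' ∉ K, v ≠ v' →
        (3 : ℤ) ≤ |((∑ w ∈ G.neighborFinset v, f s(v, w) : ℕ) : ℤ)
          - ((∑ w ∈ G.neighborFinset v', f s(v', w) : ℕ) : ℤ)|) ∧
      (∃ u : Fin K.card → V, Function.Injective u ∧ (∀ i, u i ∈ K) ∧
        ∀ i : ℕ, (hi : i + 1 < K.card) →
          (K.card : ℤ) - 2 ≤
            ((∑ w ∈ G.neighborFinset (u ⟨i + 1, hi⟩), f s(u ⟨i + 1, hi⟩, w) : ℕ) : ℤ)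
            - ((∑ w ∈ G.neighborFinset (u ⟨i, Nat.lt_of_succ_lt hi⟩),
                f s(u ⟨i, Nat.lt_of_succ_lt hi⟩, w) : ℕ) : ℤ)) := by
  classical
  choose! d hdK hdA using hdom
  set E := G.edgeFinset with hE
  set C : Finset (Sym2 V) := K.offDiag.image (fun x => s(x.1, x.2)) with hC
  set δ : V → Sym2 V := fun v => s(v, d v) with hδ
  set D : Finset (Sym2 V) := Kᶜ.image δ with hD
  have hδinj : Set.InjOn δ ↑(Kᶜ) := by
    intro x hx y hy hxy
    simp only [hδ, Sym2.eq_iff] at hxy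
    simp only [Finset.coe_compl, Set.mem_compl_iff, Finset.mem_coe] at hx hy
    have := hdK y
    grind
  have hCcard : C.card = K.card.choose 2 := Sym2.card_image_offDiag K
  have hDcard : D.card = Kᶜ.card := Finset.card_image_of_injOn hδinj
  have hCmem : ∀ a b, s(a, b) ∈ C ↔ a ∈ K ∧ b ∈ K ∧ a ≠ b := by
    intro a b
    simp only [hC, Finset.mem_image, Finset.mem_offDiag, Prod.exists, Sym2.eq_iff]
    grind
  have hDmem : ∀ v ∉ K, ∀ w, s(v, w) ∈ D → w = d v := by
    intro v hv w h
    simp only [hD, hδ, Finset.mem_image, Finset.mem_compl, Sym2.eq_iff] at h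
    have := hdK
    grind
  have hCE : C ⊆ E := by
    intro e
    induction e using Sym2.ind with
    | _ a b =>
      intro h
      obtain ⟨ha, hb, hab⟩ := (hCmem a b).1 h
      simp only [hE, SimpleGraph.mem_edgeFinset, SimpleGraph.mem_edgeSet]
      exact hclique ha hb hab
  have hDE : D ⊆ E := by
    intro e h
    simp only [hD, hδ, Finset.mem_image, Finset.mem_compl] at h
    obtain ⟨v, hv, rfl⟩ := h
    simp only [hE, SimpleGraph.mem_edgeFinset, SimpleGraph.mem_edgeSet]
    exact hdA v hv
  have hCD : Disjoint D C := by
    rw [Finset.disjoint_left]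
    intro e h h'
    simp only [hD, hδ, Finset.mem_image, Finset.mem_compl] at h
    obtain ⟨v, hv, rfl⟩ := h
    exact hv ((hCmem _ _).1 h').1
  have hRcard : (E \ (D ∪ C)).card = E.card - (Kᶜ.card + C.card) := by
    rw [Finset.card_sdiff_of_subset (Finset.union_subset hDE hCE),
      Finset.card_union_of_disjoint hCD, hDcard]
  have hle : Kᶜ.card + C.card ≤ E.card := by
    rw [← hDcard, ← Finset.card_union_of_disjoint hCD]
    exact Finset.card_le_card (Finset.union_subset hDE hCE)
  obtain ⟨M, hM⟩ : ∃ M, E.card = M + C.card := ⟨E.card - C.card, by omega⟩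
  set p := Kᶜ.card with hp
  have hpM : 3 * p ≤ M + 2 := by
    have h1 : (Fintype.card V : ℤ) - K.card = p := by
      rw [hp, Finset.card_compl, Nat.cast_sub (Finset.card_le_univ K)]
    have h2 : ((K.card : ℤ) * (K.card - 1) / 2) = C.card := by
      rw [hCcard, Nat.choose_two_right]
      push_cast [Nat.cast_sub (show 1 ≤ K.card by omega)]
      rfl
    rw [h1, h2, hM] at hm
    push_cast at hm
    omega
  -- labels for the remaining edges
  set LD : Finset ℕ := (Finset.Icc 1 p).image (fun i => 3 * i - 2) with hLD
  have hLDcard : LD.card = p := by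
    rw [hLD, Finset.card_image_of_injOn, Nat.card_Icc]
    · omega
    · intro x hx y hy hxy
      simp only [Finset.coe_Icc, Set.mem_Icc] at hx hy hxy
      omega
  have hLDsub : LD ⊆ Finset.Icc 1 M := by
    intro x hx
    simp only [hLD, Finset.mem_image, Finset.mem_Icc] at hx ⊢
    omega
  obtain ⟨g, hginj, hgm⟩ := aux_bij (E \ (D ∪ C)) (Finset.Icc 1 M \ LD) (by
    rw [hRcard, Finset.card_sdiff_of_subset hLDsub, hLDcard, Nat.card_Icc]
    omega)
  obtain ⟨r, hrinj, hrm, hrmono⟩ := aux_rank_s4 Kᶜ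
    (fun v => ∑ w ∈ (G.neighborFinset v).erase (d v), g s(v, w))
  obtain ⟨h, hh⟩ : ∃ h : Sym2 V → ℕ, ∀ v ∉ K, h s(v, d v) = 3 * r v - 2 := by
    rcases isEmpty_or_nonempty V with hV | hV
    · exact ⟨fun _ => 0, fun v => hV.elim v⟩
    · refine ⟨fun e => 3 * r (Function.invFunOn δ ↑(Kᶜ) e) - 2, fun v hv => ?_⟩
      have := hδinj.leftInvOn_invFunOn (show v ∈ (↑(Kᶜ) : Set V) by simpa using hv)
      simp only [hδ] at this ⊢
      rw [this]
  obtain ⟨ρ, hρinj, hρm, hρmono⟩ := aux_rank_s4 K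
    (fun u => ∑ w ∈ G.neighborFinset u \ K, if s(u, w) ∈ D then h s(u, w) else g s(u, w))
  obtain ⟨c, hcinj, hcm, hcmono⟩ := aux_rank_s4 C
    (Sym2.lift ⟨fun a b => ρ a + ρ b, fun a b => Nat.add_comm _ _⟩)
  set f : Sym2 V → ℕ := fun e => if e ∈ C then M + c e else if e ∈ D then h e else g e with hf
  have hhinj : Set.InjOn h ↑D := by
    intro x hx y hy hxy
    simp only [hD, hδ, Finset.coe_image, Set.mem_image, Finset.mem_coe, Finset.mem_compl] at hx hy
    obtain ⟨v, hv, rfl⟩ := hx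
    obtain ⟨w, hw, rfl⟩ := hy
    rw [hh v hv, hh w hw] at hxy
    have h1 := hrm v (by simpa using hv)
    have h2 := hrm w (by simpa using hw)
    have : v = w := hrinj (by simpa using hv) (by simpa using hw) (by omega)
    rw [this]
  have hhm : ∀ e ∈ D, h e ∈ LD := by
    intro e he
    simp only [hD, hδ, Finset.mem_image, Finset.mem_compl] at he
    obtain ⟨v, hv, rfl⟩ := he
    rw [hh v hv, hLD]
    refine Finset.mem_image_of_mem _ ?_
    have h1 := hrm v (by simpa using hv)
    simp only [Finset.mem_Icc]
    omega
  have hfC : ∀ e ∈ C, f e = M + c e := fun e he => by simp [hf, he]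
  have hfD : ∀ e ∈ D, f e = h e := fun e he => by
    simp [hf, he, Finset.disjoint_left.1 hCD he]
  have hfR : ∀ e, e ∉ C → e ∉ D → f e = g e := fun e he he' => by simp [hf, he, he']
  have hlD : ∀ e ∈ D, f e ∈ LD ∧ 1 ≤ f e ∧ f e ≤ M := by
    intro e he
    rw [hfD e he]
    exact ⟨hhm e he, Finset.mem_Icc.1 (hLDsub (hhm e he))⟩
  have hlR : ∀ e ∈ E, e ∉ C → e ∉ D → f e ∉ LD ∧ 1 ≤ f e ∧ f e ≤ M := by
    intro e hE he he'
    rw [hfR e he he']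
    have := hgm e (by simp [hE, he, he'])
    simp only [Finset.mem_sdiff, Finset.mem_Icc] at this
    exact ⟨this.2, this.1⟩
  have hlC : ∀ e ∈ C, M + 1 ≤ f e ∧ f e ≤ E.card := by
    intro e he
    rw [hfC e he]
    have := hcm e he
    omega
  have hfinj : Set.InjOn f ↑E := by
    intro x hx y hy hxy
    simp only [Finset.mem_coe] at hx hy
    by_cases hxC : x ∈ C
    · by_cases hyC : y ∈ C
      · rw [hfC x hxC, hfC y hyC] at hxy
        exact hcinj hxC hyC (by omega)
      · have := hlC x hxC
        by_cases hyD : y ∈ D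
        · have := hlD y hyD
          omega
        · have := hlR y hy hyC hyD
          omega
    · by_cases hyC : y ∈ C
      · have := hlC y hyC
        by_cases hxD : x ∈ D
        · have := hlD x hxD
          omega
        · have := hlR x hx hxC hxD
          omega
      · by_cases hxD : x ∈ D
        · by_cases hyD : y ∈ D
          · rw [hfD x hxD, hfD y hyD] at hxy
            exact hhinj hxD hyD hxy
          · exact absurd (hxy ▸ (hlD x hxD).1) (hlR y hy hyC hyD).1
        · by_cases hyD : y ∈ D
          · exact absurd (hxy ▸ (hlD y hyD).1) (hlR x hx hxC hxD).1
          · rw [hfR x hxC hxD, hfR y hyC hyD] at hxy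
            exact hginj (by simp [hx, hxC, hxD]) (by simp [hy, hyC, hyD]) hxy
  have hfmaps : ∀ e ∈ E, f e ∈ Finset.Icc 1 E.card := by
    intro e he
    rw [Finset.mem_Icc]
    by_cases heC : e ∈ C
    · have := hlC e heC
      omega
    · by_cases heD : e ∈ D
      · have := hlD e heD
        omega
      · have := hlR e he heC heD
        omega
  refine ⟨f, ⟨hfmaps, hfinj, ?_⟩, ?_, ?_⟩
  · exact Finset.surjOn_of_injOn_of_card_le f hfmaps hfinj (by simp)
  · have key : ∀ v ∉ K, (∑ w ∈ G.neighborFinset v, f s(v, w)) =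
        (3 * r v - 2) + ∑ w ∈ (G.neighborFinset v).erase (d v), g s(v, w) := by
      intro v hv
      rw [← Finset.add_sum_erase _ _ (show d v ∈ G.neighborFinset v by
        simpa using hdA v hv)]
      congr 1
      · rw [hfD _ (Finset.mem_image_of_mem δ (by simpa using hv)), hh v hv]
      · refine Finset.sum_congr rfl fun w hw => hfR _ ?_ ?_
        · rw [hCmem]
          exact fun hh => hv hh.1
        · exact fun hh => (Finset.ne_of_mem_erase hw) (hDmem v hv w hh)
    intro v hv v' hv' hne
    rw [key v hv, key v' hv']
    have m1 := hrm v (by simpa using hv)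
    have m2 := hrm v' (by simpa using hv')
    have h1 := hrmono v (by simpa using hv) v' (by simpa using hv')
    have h2 := hrmono v' (by simpa using hv') v (by simpa using hv)
    have h3 : r v ≠ r v' := fun hh => hne (hrinj (by simpa using hv) (by simpa using hv') hh)
    generalize (∑ w ∈ (G.neighborFinset v).erase (d v), g s(v, w)) = A at *
    generalize (∑ w ∈ (G.neighborFinset v').erase (d v'), g s(v', w)) = B at *
    rw [le_abs]
    omega
  · have hsurj : ∀ i : Fin K.card, ∃ u ∈ K, ρ u = i + 1 := by
      intro i
      have := Finset.surjOn_of_injOn_of_card_le (s := K) (t := Finset.Icc 1 K.card) ρ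
        (fun a ha => Finset.mem_Icc.2 (hρm a ha)) hρinj (by simp)
      obtain ⟨u, hu, hu'⟩ := this (show (i : ℕ) + 1 ∈ (↑(Finset.Icc 1 K.card) : Set ℕ) by
        simp only [Finset.coe_Icc, Set.mem_Icc]
        have := i.2
        omega)
      exact ⟨u, hu, hu'⟩
    choose u huK huρ using hsurj
    refine ⟨u, ?_, huK, ?_⟩
    · intro i j hij
      have h1 := huρ i
      rw [hij, huρ j] at h1
      ext
      omega
    intro i hi
    have hxK := huK ⟨i, Nat.lt_of_succ_lt hi⟩
    have hyK := huK ⟨i + 1, hi⟩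
    have hx := huρ ⟨i, Nat.lt_of_succ_lt hi⟩
    have hy := huρ ⟨i + 1, hi⟩
    generalize u ⟨i, Nat.lt_of_succ_lt hi⟩ = x at *
    generalize u ⟨i + 1, hi⟩ = y at *
    simp only at hx hy
    have hxy : x ≠ y := by
      rintro rfl
      omega
    have key : ∀ x ∈ K, ∀ y ∈ K, x ≠ y → (∑ w ∈ G.neighborFinset x, f s(x, w)) =
        (∑ w ∈ G.neighborFinset x \ K, if s(x, w) ∈ D then h s(x, w) else g s(x, w)) +
        (f s(x, y) + ∑ w ∈ (K.erase x).erase y, f s(x, w)) := by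
      intro x hx y hy hxy
      have hsub : K.erase x ⊆ G.neighborFinset x := by
        intro w hw
        rw [Finset.mem_erase] at hw
        rw [SimpleGraph.mem_neighborFinset]
        exact hclique hx hw.2 (Ne.symm hw.1)
      rw [Finset.add_sum_erase _ (fun w => f s(x, w)) (show y ∈ K.erase x by
        simp [hy, Ne.symm hxy]), ← Finset.sum_sdiff hsub]
      congr 1
      have : G.neighborFinset x \ K.erase x = G.neighborFinset x \ K := by
        ext w
        simp only [Finset.mem_sdiff, Finset.mem_erase, SimpleGraph.mem_neighborFinset]
        have : G.Adj x w → w ≠ x := fun h => h.ne'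
        tauto
      rw [this]
      refine Finset.sum_congr rfl fun w hw => ?_
      have : s(x, w) ∉ C := by
        rw [hCmem]
        exact fun h => (Finset.mem_sdiff.1 hw).2 h.2.1
      simp [hf, this]
    rw [key x hxK y hyK hxy, key y hyK x hxK hxy.symm, Sym2.eq_swap (a := y) (b := x),
      Finset.erase_right_comm (a := y) (b := x)]
    have h1 := hρmono y hyK x hxK
    have h2 : (∑ w ∈ (K.erase x).erase y, f s(x, w)) + (K.card - 2) ≤
        ∑ w ∈ (K.erase x).erase y, f s(y, w) := by
      have hc : ((K.erase x).erase y).card = K.card - 2 := by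
        rw [Finset.card_erase_of_mem (by simp [hyK, hxy.symm]), Finset.card_erase_of_mem hxK]
        omega
      rw [← hc, Finset.card_eq_sum_ones, ← Finset.sum_add_distrib]
      refine Finset.sum_le_sum fun w hw => ?_
      simp only [Finset.mem_erase] at hw
      have e1 : s(x, w) ∈ C := (hCmem _ _).2 ⟨hxK, hw.2.2, Ne.symm hw.2.1⟩
      have e2 : s(y, w) ∈ C := (hCmem _ _).2 ⟨hyK, hw.2.2, Ne.symm hw.1⟩
      rw [hfC _ e1, hfC _ e2]
      have := hcmono _ e1 _ e2 (by simp only [Sym2.lift_mk]; omega)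
      omega
    generalize (∑ w ∈ G.neighborFinset x \ K,
      if s(x, w) ∈ D then h s(x, w) else g s(x, w)) = A at *
    generalize (∑ w ∈ G.neighborFinset y \ K,
      if s(y, w) ∈ D then h s(y, w) else g s(y, w)) = B at *
    have h3 : A ≤ B := by
      by_contra hlt
      have := h1 (by omega)
      omega
    generalize (∑ w ∈ (K.erase x).erase y, f s(x, w)) = A' at *
    generalize (∑ w ∈ (K.erase x).erase y, f s(y, w)) = B' at *
    omega
end

section
/- Let G = (V,E) be a finite simple graph and B ⊆ V a clique such that every vertex v ∈ V \ B satisfies either N(v) ⊆ B or B ⊆ N(v), where N(v) is the set of neighbors of v. Then for every vertex v ∈ V \ B and every vertex u ∈ B, d(v) ≤ d(u); in particular d(v) ≤ min_{u ∈ B} d(u). -/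
open Finset

/-- If `B` is a clique in a finite simple graph `G` such that every vertex `v ∉ B`
satisfies `N(v) ⊆ B` or `B ⊆ N(v)`, then every vertex outside `B` has degree at most the
degree of every vertex of `B`; in particular `d(v) ≤ min_{u ∈ B} d(u)`. -/
theorem degree_le_of_clique_split {V : Type*} [Fintype V] [DecidableEq V]
    (G : SimpleGraph V) [DecidableRel G.Adj] (B : Finset V)
    (hclique : G.IsClique ↑B)
    (h : ∀ v ∉ B, G.neighborFinset v ⊆ B ∨ B ⊆ G.neighborFinset v) :
    ∀ v ∉ B, ∀ u ∈ B, G.degree v ≤ G.degree u := by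
  intro v hv u hu
  have key : ∀ w, G.Adj v w → w ≠ u → G.Adj u w := by
    intro w hw hne
    by_cases hwB : w ∈ B
    · exact hclique (Finset.mem_coe.2 hu) (Finset.mem_coe.2 hwB) hne.symm
    · rcases h w hwB with h1 | h1
      · exact absurd (h1 ((G.mem_neighborFinset w v).2 hw.symm)) hv
      · exact ((G.mem_neighborFinset w u).1 (h1 hu)).symm
  rw [← G.card_neighborFinset_eq_degree, ← G.card_neighborFinset_eq_degree]
  by_cases huv : G.Adj v u
  · have hmem : u ∈ G.neighborFinset v := (G.mem_neighborFinset v u).2 huv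
    have hnot : v ∉ (G.neighborFinset v).erase u := by simp
    rw [← Finset.card_erase_add_one hmem, ← Finset.card_insert_of_notMem hnot]
    apply Finset.card_le_card
    intro w hw
    rw [G.mem_neighborFinset]
    rcases Finset.mem_insert.1 hw with rfl | hw
    · exact huv.symm
    · obtain ⟨h1, h2⟩ := Finset.mem_erase.1 hw
      exact key w ((G.mem_neighborFinset v w).1 h2) h1
  · apply Finset.card_le_card
    intro w hw
    rw [G.mem_neighborFinset] at hw ⊢
    refine key w hw ?_
    rintro rfl
    exact huv hw
end

section
/- Let G = (V,E) be a finite simple graph and B ⊆ V a clique with |B| ≥ 4 such that every vertex v ∈ V \ B has at least one neighbor in B, and every vertex v ∈ V \ B satisfies either N(v) ⊆ B or B ⊆ N(v). Then G is antimagic. -/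
open Finset

theorem am_ext {α : Type*} [DecidableEq α] (S S' : Finset α) (hS : S ⊆ S') (f : α → ℕ)
    (hf : Set.BijOn f ↑S ↑(Finset.Icc 1 S.card)) (g : α → ℕ) :
    ∃ f' : α → ℕ, (∀ e ∈ S, f' e = f e) ∧
      Set.BijOn f' ↑S' ↑(Finset.Icc 1 S'.card) ∧
      (∀ a ∈ S, ∀ b ∈ S', b ∉ S → f' a < f' b) ∧
      (∀ a ∈ S', a ∉ S → ∀ b ∈ S', b ∉ S → g a < g b → f' a < f' b) := by
  suffices H : ∀ T : Finset α, Disjoint S T → ∃ f' : α → ℕ, (∀ e ∈ S, f' e = f e) ∧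
      Set.BijOn f' ↑(S ∪ T) ↑(Finset.Icc 1 (S ∪ T).card) ∧
      (∀ a ∈ S, ∀ b ∈ T, f' a < f' b) ∧
      (∀ a ∈ T, ∀ b ∈ T, g a < g b → f' a < f' b) by
    obtain ⟨f', h1, h2, h3, h4⟩ := H (S' \ S) disjoint_sdiff
    rw [Finset.union_sdiff_of_subset hS] at h2
    refine ⟨f', h1, h2, fun a ha b hb hb' => h3 a ha b (by simp [hb, hb']),
      fun a ha ha' b hb hb' => h4 a (by simp [ha, ha']) b (by simp [hb, hb'])⟩
  intro T
  induction T using Finset.induction_on_max_value g with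
  | empty => intro _; exact ⟨f, by simp, by simpa using hf, by simp, by simp⟩
  | insert a T ha hmax ih =>
    intro hd
    rw [Finset.disjoint_insert_right] at hd
    obtain ⟨f', h1, h2, h3, h4⟩ := ih hd.2
    have haU : a ∉ S ∪ T := by simp [hd.1, ha]
    set n := (S ∪ T).card with hn
    have hle : ∀ x ∈ S ∪ T, f' x ≤ n := fun x hx => by
      have := h2.mapsTo (Finset.mem_coe.2 hx)
      simp at this; exact this.2
    have hcardn : (S ∪ insert a T).card = n + 1 := by
      rw [Finset.union_insert, Finset.card_insert_of_notMem haU]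
    have hup : ∀ x ∈ S ∪ T, Function.update f' a (n+1) x = f' x := fun x hx => by
      rw [Function.update_of_ne]; rintro rfl; exact haU hx
    refine ⟨Function.update f' a (n+1), ?_, ?_, ?_, ?_⟩
    · intro e he
      rw [hup e (by simp [he]), h1 e he]
    · rw [hcardn, Finset.union_insert]
      have e1 : ((insert a (S ∪ T) : Finset α) : Set α) = insert a (↑(S ∪ T)) := by simp
      have e2 : ((Finset.Icc 1 (n+1) : Finset ℕ) : Set ℕ) = insert (n+1) (↑(Finset.Icc 1 n)) := by
        ext x; simp; omega
      rw [e1, e2]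
      have h2' : Set.BijOn (Function.update f' a (n+1)) ↑(S ∪ T) ↑(Finset.Icc 1 n) :=
        h2.congr (fun x hx => (hup x hx).symm)
      have := h2'.insert (a := a) (by simp)
      simpa using this
    · intro x hx y hy
      rw [hup x (by simp [hx])]
      rcases Finset.mem_insert.1 hy with rfl | hy
      · have := hle x (by simp [hx])
        simp; omega
      · rw [hup y (by simp [hy])]; exact h3 x hx y hy
    · intro x hx y hy hxy
      rcases Finset.mem_insert.1 hx with rfl | hx
      · rcases Finset.mem_insert.1 hy with rfl | hy
        · omega
        · have := hmax y hy; omega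
      · rw [hup x (by simp [hx])]
        rcases Finset.mem_insert.1 hy with rfl | hy
        · have := hle x (Finset.mem_union_right _ (by assumption))
          simp; omega
        · rw [hup y (by simp [hy])]; exact h4 x hx y hy hxy

/-- If `B` is a clique of order at least `4` in a graph `G` such that every vertex outside
`B` has a neighbor in `B` and satisfies `N(v) ⊆ B` or `B ⊆ N(v)`, then `G` is antimagic. -/
theorem antimagic_of_clique_split {V : Type*} [Fintype V] [DecidableEq V]
    (G : SimpleGraph V) [DecidableRel G.Adj] (B : Finset V)
    (hclique : G.IsClique ↑B) (hcard : 4 ≤ B.card)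
    (hdom : ∀ v ∉ B, ∃ u ∈ B, G.Adj v u)
    (h : ∀ v ∉ B, G.neighborFinset v ⊆ B ∨ B ⊆ G.neighborFinset v) :
    IsAntimagic G := by
  classical
  have hc : ∀ v, ∃ u, v ∉ B → (u ∈ B ∧ G.Adj v u) := fun v => by
    by_cases hv : v ∈ B
    · exact ⟨v, fun h => absurd hv h⟩
    · obtain ⟨u, h1, h2⟩ := hdom v hv; exact ⟨u, fun _ => ⟨h1, h2⟩⟩
  choose c hc using hc
  have hadj : ∀ a ∈ B, ∀ b ∈ B, a ≠ b → G.Adj a b := fun a ha b hb hab =>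
    hclique (Finset.mem_coe.2 ha) (Finset.mem_coe.2 hb) hab
  set E := G.edgeFinset with hE
  let BB := E.filter (fun e => ∀ x ∈ e, x ∈ B)
  let S1 := E.filter (fun e => ∀ x ∈ e, x ∉ B)
  let S3 := E.filter (fun e => ¬ ∀ x ∈ e, x ∈ B)
  let S2 := S3.filter (fun e => ¬ ∃ u, u ∉ B ∧ e = s(u, c u))
  have mE : ∀ u v, s(u,v) ∈ E ↔ G.Adj u v := fun u v => by simp [hE]
  have m1 : ∀ u v, s(u,v) ∈ S1 ↔ G.Adj u v ∧ u ∉ B ∧ v ∉ B := fun u v => by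
    simp [S1, mE]
  have m3 : ∀ u v, s(u,v) ∈ S3 ↔ G.Adj u v ∧ ¬ (u ∈ B ∧ v ∈ B) := fun u v => by
    simp only [S3, mem_filter, mE, Sym2.mem_iff, forall_eq_or_imp, forall_eq]
  have m2 : ∀ u v, u ∉ B → (s(u,v) ∈ S2 ↔ G.Adj u v ∧ v ≠ c u ∧ (v ∉ B ∨ v ∈ B)) := by
    intro u v hu
    simp only [S2, Finset.mem_filter, m3]
    constructor
    · rintro ⟨⟨h1, h2⟩, h3⟩
      refine ⟨h1, ?_, (em _).symm⟩
      rintro rfl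
      exact h3 ⟨u, hu, rfl⟩
    · rintro ⟨h1, h2, -⟩
      refine ⟨⟨h1, fun h => hu h.1⟩, ?_⟩
      rintro ⟨w, hw, he⟩
      rcases Sym2.eq_iff.1 he with ⟨rfl, rfl⟩ | ⟨rfl, rfl⟩
      · exact h2 rfl
      · exact hu (hc _ hw).1
  have s12 : S1 ⊆ S2 := by
    intro e
    induction e using Sym2.ind with
    | _ u v =>
      rw [m1]
      rintro ⟨h1, h2, h3⟩
      rw [m2 _ _ h2]
      exact ⟨h1, fun h => h3 (h ▸ (hc u h2).1), Or.inl h3⟩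
  have s23 : S2 ⊆ S3 := Finset.filter_subset _ _
  have s3E : S3 ⊆ E := Finset.filter_subset _ _
  obtain ⟨f1, -, bij1, -, -⟩ := am_ext ∅ S1 (by simp) (fun _ => 0) (by simp) (fun _ => 0)
  obtain ⟨f2, ag2, bij2, lt2, -⟩ := am_ext S1 S2 s12 f1 bij1 (fun _ => 0)
  let p : V → ℕ := fun u => ∑ v ∈ (G.neighborFinset u).erase (c u), f2 s(u, v)
  obtain ⟨f3, ag3, bij3, lt3, ord3⟩ := am_ext S2 S3 s23 f2 bij2
    (fun e => ∑ x ∈ univ.filter (fun x => x ∉ B ∧ x ∈ e), p x)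
  let w : V → ℕ := fun b => ∑ v ∈ (G.neighborFinset b).filter (· ∉ B), f3 s(b, v)
  obtain ⟨r, -, bijr, -, ordr⟩ := am_ext ∅ B (by simp) (fun _ => 0) (by simp) w
  obtain ⟨f, ag, bij, lt, ord⟩ := am_ext S3 E s3E f3 bij3
    (fun e => ∑ x ∈ univ.filter (fun x => x ∈ e), r x)
  have L12 : ∀ a ∈ S1, ∀ b ∈ S3, b ∉ S1 → f a < f b := by
    intro a ha b hb hb1
    rw [ag a (s23 (s12 ha)), ag b hb]
    by_cases hb2 : b ∈ S2
    · rw [ag3 a (s12 ha), ag3 b hb2]; exact lt2 a ha b hb2 hb1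
    · exact lt3 a (s12 ha) b hb hb2
  -- outside vs outside
  have hp : ∀ u ∉ B, ∑ v ∈ G.neighborFinset u, f s(u,v) = p u + f3 s(u, c u) := by
    intro u hu
    have hcu : c u ∈ G.neighborFinset u := by simpa using (hc u hu).2
    rw [← Finset.sum_erase_add _ _ hcu, ag s(u, c u) ((m3 _ _).2 ⟨(hc u hu).2, fun h => hu h.1⟩)]
    congr 1
    refine Finset.sum_congr rfl fun v hv => ?_
    rw [Finset.mem_erase, SimpleGraph.mem_neighborFinset] at hv
    have : s(u,v) ∈ S2 := (m2 _ _ hu).2 ⟨hv.2, hv.1, (em _).symm⟩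
    rw [ag _ (s23 this), ag3 _ this]
  have hg : ∀ u ∉ B, ∑ x ∈ univ.filter (fun x => x ∉ B ∧ x ∈ s(u, c u)), p x = p u := by
    intro u hu
    have : univ.filter (fun x => x ∉ B ∧ x ∈ s(u, c u)) = {u} := by
      ext x
      simp only [mem_filter, mem_univ, true_and, Sym2.mem_iff, mem_singleton]
      constructor
      · rintro ⟨h1, rfl | rfl⟩
        · rfl
        · exact absurd (hc u hu).1 h1
      · rintro rfl; exact ⟨hu, Or.inl rfl⟩
    rw [this, Finset.sum_singleton]
  have mM : ∀ u ∉ B, s(u, c u) ∈ S3 ∧ s(u, c u) ∉ S2 := fun u hu =>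
    ⟨(m3 _ _).2 ⟨(hc u hu).2, fun h => hu h.1⟩, fun h => ((m2 _ _ hu).1 h).2.1 rfl⟩
  have UU : ∀ u ∉ B, ∀ v ∉ B, p u + f3 s(u, c u) = p v + f3 s(v, c v) → u = v := by
    intro u hu v hv huv
    have k1 := ord3 _ (mM u hu).1 (mM u hu).2 _ (mM v hv).1 (mM v hv).2
    have k2 := ord3 _ (mM v hv).1 (mM v hv).2 _ (mM u hu).1 (mM u hu).2
    simp only [hg u hu, hg v hv] at k1 k2
    have hpe : p u = p v := by
      rcases lt_trichotomy (p u) (p v) with h | h | h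
      · have := k1 h; omega
      · exact h
      · have := k2 h; omega
    have he := bij3.injOn (Finset.mem_coe.2 (mM u hu).1) (Finset.mem_coe.2 (mM v hv).1)
      (by omega)
    rcases Sym2.eq_iff.1 he with ⟨h1, -⟩ | ⟨h1, -⟩
    · exact h1
    · exact absurd (h1 ▸ (hc v hv).1) hu
  -- clique sums
  have hw : ∀ b ∈ B, ∑ v ∈ G.neighborFinset b, f s(b,v) = w b + ∑ v ∈ B.erase b, f s(b,v) := by
    intro b hb
    rw [← Finset.sum_filter_add_sum_filter_not (G.neighborFinset b) (· ∉ B)]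
    congr 1
    · refine Finset.sum_congr rfl fun v hv => ?_
      rw [Finset.mem_filter, SimpleGraph.mem_neighborFinset] at hv
      exact ag _ ((m3 _ _).2 ⟨hv.1, fun h => hv.2 h.2⟩)
    · refine Finset.sum_congr ?_ fun _ _ => rfl
      ext v
      simp only [mem_filter, SimpleGraph.mem_neighborFinset, not_not, mem_erase]
      exact ⟨fun h => ⟨h.1.ne', h.2⟩, fun h => ⟨hadj b hb v h.2 h.1.symm, h.2⟩⟩
  have mBB : ∀ a ∈ B, ∀ b ∈ B, a ≠ b → s(a,b) ∈ E ∧ s(a,b) ∉ S3 := fun a ha b hb hab =>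
    ⟨(mE _ _).2 (hadj a ha b hb hab), fun h => ((m3 _ _).1 h).2 ⟨ha, hb⟩⟩
  have gr : ∀ a b : V, a ≠ b → ∑ x ∈ univ.filter (fun x => x ∈ s(a,b)), r x = r a + r b := by
    intro a b hab
    have : univ.filter (fun x => x ∈ s(a,b)) = {a, b} := by ext x; simp
    rw [this, Finset.sum_pair hab]
  have BBlt : ∀ a ∈ B, ∀ b ∈ B, r a < r b →
      ∑ v ∈ G.neighborFinset a, f s(a,v) < ∑ v ∈ G.neighborFinset b, f s(b,v) := by
    intro a ha b hb hab
    have hne : a ≠ b := by rintro rfl; omega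
    rw [hw a ha, hw b hb]
    have hwle : w a ≤ w b := by
      by_contra hcon
      have := ordr b hb (by simp) a ha (by simp) (not_le.1 hcon)
      omega
    rw [← Finset.sum_erase_add (B.erase a) _ (Finset.mem_erase.2 ⟨hne.symm, hb⟩),
      ← Finset.sum_erase_add (B.erase b) _ (Finset.mem_erase.2 ⟨hne, ha⟩),
      Finset.erase_right_comm (a := b), Sym2.eq_swap (a := a) (b := b)]
    have : ∑ x ∈ (B.erase a).erase b, f s(a,x) < ∑ x ∈ (B.erase a).erase b, f s(b,x) := by
      apply Finset.sum_lt_sum_of_nonempty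
      · rw [← Finset.card_pos, Finset.card_erase_of_mem (Finset.mem_erase.2 ⟨hne.symm, hb⟩),
          Finset.card_erase_of_mem ha]
        omega
      · intro x hx
        simp only [mem_erase] at hx
        have q1 := mBB a ha x hx.2.2 (Ne.symm hx.2.1)
        have q2 := mBB b hb x hx.2.2 (Ne.symm hx.1)
        refine ord _ q1.1 q1.2 _ q2.1 q2.2 ?_
        simp only [gr a x (Ne.symm hx.2.1), gr b x (Ne.symm hx.1)]
        omega
    rw [Finset.erase_right_comm (a := a)] at this ⊢
    omega
  have UB : ∀ u ∉ B, ∀ b ∈ B,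
      ∑ v ∈ G.neighborFinset u, f s(u,v) < ∑ v ∈ G.neighborFinset b, f s(b,v) := by
    intro u hu b hb
    by_cases hub : B ⊆ G.neighborFinset u
    · have hbu : b ∈ G.neighborFinset u := hub hb
      have hub' : G.Adj u b := by simpa using hbu
      have hub2 : u ∈ G.neighborFinset b := by simpa using hub'.symm
      rw [← Finset.sum_erase_add _ _ hbu, ← Finset.sum_erase_add _ _ hub2,
        Sym2.eq_swap (a := u) (b := b)]
      have hsub : (G.neighborFinset u).erase b ⊆ (G.neighborFinset b).erase u := by
        intro x hx
        simp only [mem_erase, SimpleGraph.mem_neighborFinset] at hx ⊢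
        refine ⟨hx.2.ne', ?_⟩
        by_cases hxB : x ∈ B
        · exact hadj b hb x hxB (Ne.symm hx.1)
        · rcases h x hxB with h' | h'
          · exact absurd (h' (by simpa using hx.2.symm)) hu
          · have := h' hb
            simpa using ((SimpleGraph.mem_neighborFinset _ _ _).1 this).symm
      have hlt : ∑ x ∈ (G.neighborFinset u).erase b, f s(u,x)
          < ∑ x ∈ (G.neighborFinset u).erase b, f s(b,x) := by
        apply Finset.sum_lt_sum_of_nonempty
        · rw [← Finset.card_pos, Finset.card_erase_of_mem hbu]
          have := Finset.card_le_card hub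
          omega
        · intro x hx
          have hx' := hsub hx
          simp only [mem_erase, SimpleGraph.mem_neighborFinset] at hx hx'
          by_cases hxB : x ∈ B
          · have q := mBB b hb x hxB (Ne.symm hx.1)
            exact lt _ ((m3 _ _).2 ⟨hx.2, fun h => hu h.1⟩) _ q.1 q.2
          · exact L12 _ ((m1 _ _).2 ⟨hx.2, hu, hxB⟩) _
              ((m3 _ _).2 ⟨hx'.2, fun h => hxB h.2⟩) (fun h => ((m1 _ _).1 h).2.1 hb)
      have := Finset.sum_le_sum_of_subset (f := fun x => f s(b,x)) hsub
      omega
    · have hsub := (h u hu).resolve_right hub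
      have hcl : (G.neighborFinset u).card < B.card :=
        Finset.card_lt_card ⟨hsub, hub⟩
      rw [hw b hb]
      have hS3 : ∀ e ∈ S3, f e ≤ S3.card := fun e he => by
        rw [ag e he]
        have := bij3.mapsTo (Finset.mem_coe.2 he)
        simp at this; exact this.2
      have hBig : ∀ e ∈ E, e ∉ S3 → S3.card + 1 ≤ f e := by
        intro e he he3
        rcases Nat.eq_zero_or_pos S3.card with h0 | h0
        · have := bij.mapsTo (Finset.mem_coe.2 he)
          simp only [coe_Icc, Set.mem_Icc] at this; omega
        · obtain ⟨x, hx, hxe⟩ := bij3.surjOn (show S3.card ∈ _ by simp; exact Finset.card_pos.1 h0)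
          have := lt x hx e he he3
          rw [ag x hx, hxe] at this
          exact this
      have k1 : ∑ v ∈ G.neighborFinset u, f s(u,v) ≤ (G.neighborFinset u).card * S3.card := by
        rw [← smul_eq_mul]
        apply Finset.sum_le_card_nsmul
        intro x hx
        exact hS3 _ ((m3 _ _).2 ⟨by simpa using hx, fun h => hu h.1⟩)
      have k2 : (B.erase b).card * (S3.card + 1) ≤ ∑ v ∈ B.erase b, f s(b,v) := by
        rw [← smul_eq_mul]
        apply Finset.card_nsmul_le_sum
        intro x hx
        rw [mem_erase] at hx
        have q := mBB b hb x hx.2 (Ne.symm hx.1)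
        exact hBig _ q.1 q.2
      rw [Finset.card_erase_of_mem hb] at k2
      have k3 : (G.neighborFinset u).card * S3.card ≤ (B.card - 1) * S3.card :=
        Nat.mul_le_mul_right _ (by omega)
      rw [mul_add] at k2
      omega
  refine ⟨f, bij, ?_⟩
  intro u v huv
  simp only at huv
  by_cases hu : u ∈ B
  · by_cases hv : v ∈ B
    · rcases lt_trichotomy (r u) (r v) with h' | h' | h'
      · have := BBlt u hu v hv h'; omega
      · exact bijr.injOn (Finset.mem_coe.2 hu) (Finset.mem_coe.2 hv) h'
      · have := BBlt v hv u hu h'; omega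
    · have := UB v hv u hu; omega
  · by_cases hv : v ∈ B
    · have := UB u hu v hv; omega
    · rw [hp u hu, hp v hv] at huv
      exact UU u hu v hv huv
end

section
/- Let G = (V,E) be a finite simple graph with n vertices. If G has a vertex x with d(x) = Δ(G) ≥ 2n/3, and x has a neighbor y such that {x,y} is a dominating clique in G (i.e., x and y are adjacent and every other vertex is adjacent to x or to y), then G is antimagic. -/
open Finset

theorem am_rank {α : Type*} [DecidableEq α] (key : α → ℕ) : ∀ (n : ℕ) (W : Finset α), W.card = n →
    ∃ r : α → ℕ, (∀ v ∈ W, 1 ≤ r v ∧ r v ≤ n) ∧ (∀ u ∈ W, ∀ v ∈ W, r u = r v → u = v) ∧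
      (∀ u ∈ W, ∀ v ∈ W, r u < r v → key u ≤ key v) ∧
      (∀ u ∈ W, r u ≤ (W.filter (fun v => key v ≤ key u)).card) ∧
      (2 * ∑ v ∈ W, r v = n * (n + 1)) := by
  intro n
  induction n with
  | zero =>
    intro W hW
    rw [Finset.card_eq_zero] at hW
    subst hW
    exact ⟨fun _ => 0, by simp⟩
  | succ n ih =>
    intro W hW
    have hne : W.Nonempty := by rw [← Finset.card_pos]; omega
    obtain ⟨a, ha, hmax⟩ := Finset.exists_max_image W key hne
    have hc : (W.erase a).card = n := by rw [Finset.card_erase_of_mem ha]; omega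
    obtain ⟨r, h1, h2, h3, h4, h5⟩ := ih (W.erase a) hc
    have hr : ∀ v, v ≠ a → Function.update r a (n+1) v = r v := by
      intro v hv; simp [Function.update_of_ne hv]
    have hra : Function.update r a (n+1) a = n + 1 := by simp
    refine ⟨Function.update r a (n+1), ?_, ?_, ?_, ?_, ?_⟩
    · intro v hv
      by_cases e : v = a
      · subst e; rw [hra]; omega
      · rw [hr v e]; have := h1 v (by simp [e, hv]); omega
    · intro u hu v hv
      by_cases e : v = a <;> by_cases e' : u = a
      · intro _; rw [e, e']
      · subst e; rw [hra, hr u e']; have := h1 u (by simp [e', hu]); omega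
      · subst e'; rw [hra, hr v e]; have := h1 v (by simp [e, hv]); omega
      · rw [hr u e', hr v e]; exact h2 u (by simp [e', hu]) v (by simp [e, hv])
    · intro u hu v hv
      by_cases e : v = a <;> by_cases e' : u = a
      · intro _; rw [e, e']
      · subst e; intro _; exact hmax u hu
      · subst e'; rw [hra, hr v e]; have := h1 v (by simp [e, hv]); omega
      · rw [hr u e', hr v e]; exact h3 u (by simp [e', hu]) v (by simp [e, hv])
    · intro u hu
      by_cases e' : u = a
      · subst e'; rw [hra, Finset.filter_true_of_mem hmax, hW]
      · rw [hr u e']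
        refine (h4 u (by simp [e', hu])).trans (Finset.card_le_card ?_)
        exact Finset.filter_subset_filter _ (Finset.erase_subset _ _)
    · rw [← Finset.add_sum_erase W _ ha, hra, Finset.sum_congr rfl
        (fun v hv => hr v (Finset.ne_of_mem_erase hv)), mul_add, h5]
      ring

theorem am_sum_upper : ∀ (M : ℕ) (S : Finset ℕ), (∀ v ∈ S, v ≤ M ∧ 1 ≤ v) →
    2 * ∑ v ∈ S, v + S.card * S.card ≤ S.card * (2 * M + 1) ∧ S.card ≤ M := by
  intro M
  induction M with
  | zero =>
    intro S hS
    have : S = ∅ := by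
      apply Finset.eq_empty_of_forall_notMem
      intro v hv; have := hS v hv; omega
    subst this; simp
  | succ M ih =>
    intro S hS
    by_cases h : M + 1 ∈ S
    · have hc := Finset.card_erase_add_one h
      obtain ⟨h1, h2⟩ := ih (S.erase (M+1)) (by
        intro v hv
        have := hS v (Finset.mem_of_mem_erase hv)
        have := Finset.ne_of_mem_erase hv
        omega)
      rw [← Finset.add_sum_erase S _ h, ← hc]
      constructor
      · nlinarith
      · omega
    · obtain ⟨h1, h2⟩ := ih S (by
        intro v hv
        have := hS v hv
        have : v ≠ M + 1 := by rintro rfl; exact h hv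
        omega)
      constructor
      · nlinarith
      · omega

theorem am_sum_upper' {α : Type*} [DecidableEq α] (M : ℕ) (r : α → ℕ) (S : Finset α)
    (h1 : ∀ v ∈ S, 1 ≤ r v ∧ r v ≤ M) (h2 : ∀ u ∈ S, ∀ v ∈ S, r u = r v → u = v) :
    2 * ∑ v ∈ S, r v + S.card * S.card ≤ S.card * (2 * M + 1) := by
  have := (am_sum_upper M (S.image r) (by
    intro v hv
    obtain ⟨u, hu, rfl⟩ := Finset.mem_image.1 hv
    exact ⟨(h1 u hu).2, (h1 u hu).1⟩)).1
  have hi : Set.InjOn r S := fun u hu v hv e => h2 u hu v hv e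
  rwa [Finset.card_image_of_injOn hi, Finset.sum_image hi] at this

theorem am_arith (M L p q k k' s : ℕ) (hM : M = k + 2 * (p + q)) (hk : p + q + 1 ≤ k)
    (hk' : k' ≤ k) (hL : q + 2 * k' ≤ 2 * L) (T SB0 SB1 c N' : ℕ)
    (hT : 2 * T = M * (M + 1)) (h0 : SB0 ≤ p * p) (h1 : 2 * SB1 + q * q ≤ q * (2 * M + 1))
    (hc : c ≤ p + q) (hs : s ≤ k' * k') :
    (p + q) * L + (SB0 + SB1) + c + s <
      (M - (p + q)) * L + (T - (SB0 + SB1)) + N' := by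
  obtain ⟨t, rfl⟩ : ∃ t, k = p + q + 1 + t := ⟨k - (p+q+1), by omega⟩
  have e1 : M - (p + q) = p + q + 1 + t + p + q := by omega
  have e2 : k' * k' ≤ (p + q + 1 + t) * k' := Nat.mul_le_mul_right _ hk'
  have e3 : (p + q + 1 + t) * (q + 2 * k') ≤ (p + q + 1 + t) * (2 * L) := Nat.mul_le_mul_left _ hL
  rw [e1]
  have key : 2 * ((p + q) * L + (SB0 + SB1) + c + s) + 2 * (SB0 + SB1) <
     2 * ((p + q + 1 + t + p + q) * L) + 2 * T  + 2 * N' := by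
    rw [hT]
    subst hM
    nlinarith [Nat.zero_le (p*t), Nat.zero_le (q*t), Nat.zero_le (p*q), Nat.zero_le (p*p)]
  omega

theorem am_hole {α : Type*} [DecidableEq α] (W B : Finset α) (hB : B ⊆ W) (M C : ℕ) (r a : α → ℕ)
    (h1 : ∀ v ∈ W, 1 ≤ r v ∧ r v ≤ M) (h2 : ∀ u ∈ W, ∀ v ∈ W, r u = r v → u = v)
    (h3 : ∀ u ∈ W, ∀ v ∈ W, r u ≤ r v → a u ≤ a v) :
    ∃ j, 1 ≤ j ∧ j ≤ M + 1 ∧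
      (∀ v ∈ W, r v < j → a v < C + j + ∑ u ∈ B, (if j ≤ r u then 1 else 0)) ∧
      (∀ v ∈ W, j ≤ r v → C + j + ∑ u ∈ B, (if j ≤ r u then 1 else 0) ≤ a v) := by
  set A : ℕ → ℕ := fun j => C + j + ∑ u ∈ B, (if j ≤ r u then 1 else 0) with hA
  have hmono : ∀ j, A j ≤ A (j + 1) := by
    intro j
    have : ∑ u ∈ B, (if j ≤ r u then 1 else 0) ≤
        (∑ u ∈ B, (if j + 1 ≤ r u then 1 else 0)) + ∑ u ∈ B, (if r u = j then 1 else 0) := by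
      rw [← Finset.sum_add_distrib]
      apply Finset.sum_le_sum
      intro u _
      split_ifs <;> omega
    have h : ∑ u ∈ B, (if r u = j then 1 else 0) ≤ 1 := by
      rw [← Finset.card_filter, Finset.card_le_one]
      intro u hu v hv
      rw [Finset.mem_filter] at hu hv
      exact h2 u (hB hu.1) v (hB hv.1) (by omega)
    simp only [hA]
    omega
  have hex : ∃ j, 1 ≤ j ∧ ∀ v ∈ W, j ≤ r v → A j ≤ a v :=
    ⟨M + 1, by omega, fun v hv h => by have := h1 v hv; omega⟩
  classical
  have hs := Nat.find_spec hex
  have hle : Nat.find hex ≤ M + 1 :=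
    Nat.find_min' hex ⟨by omega, fun v hv h => by have := h1 v hv; omega⟩
  have hm : ∀ m, m < Nat.find hex → ¬ (1 ≤ m ∧ ∀ v ∈ W, m ≤ r v → A m ≤ a v) :=
    fun m hm => Nat.find_min hex hm
  generalize Nat.find hex = j at hs hle hm
  refine ⟨j, hs.1, hle, ?_, hs.2⟩
  intro v hv hlt
  have hv1 := h1 v hv
  obtain ⟨i, rfl⟩ : ∃ i, j = i + 1 := ⟨j - 1, by omega⟩
  have := hm i (by omega)
  push Not at this
  obtain ⟨u, hu, h, h'⟩ := this (by omega)
  have := h3 v hv u hu (by omega)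
  have := hmono i
  change a v < A (i + 1)
  omega

theorem am_core {α : Type*} [DecidableEq α] (W N B : Finset α) (hWu : N ∪ B = W)
    (hd : Disjoint N B) (w : α → ℕ) (L s k k' : ℕ)
    (hN : N.card = k + B.card) (hk : B.card + 1 ≤ k) (hk' : k' ≤ k) (hs : s ≤ k' * k')
    (hq : (B.filter (fun v => w v ≠ 0)).card + 2 * k' ≤ 2 * L)
    (hw : ∀ v ∈ W, w v ≤ N.card * L) :
    ∃ (g : α → ℕ) (j : ℕ), L + 1 ≤ j ∧ j ≤ L + W.card + 1 ∧
      (∀ v ∈ W, L + 1 ≤ g v ∧ g v ≤ L + W.card + 1 ∧ g v ≠ j) ∧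
      (∀ u ∈ W, ∀ v ∈ W, g u = g v → u = v) ∧
      (∀ u ∈ W, ∀ v ∈ W, w u + g u = w v + g v → u = v) ∧
      (∀ v ∈ W, w v + g v ≠ j + ∑ u ∈ B, g u + s) ∧
      (∀ v ∈ W, w v + g v < j + ∑ u ∈ N, g u) ∧
      j + ∑ u ∈ B, g u + s < j + ∑ u ∈ N, g u := by
  have hBW : B ⊆ W := hWu ▸ Finset.subset_union_right
  have hNW : N ⊆ W := hWu ▸ Finset.subset_union_left
  have hWc : W.card = k + 2 * B.card := by
    rw [← hWu, Finset.card_union_of_disjoint hd]; omega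
  obtain ⟨r, h1, h2, h3, h4, h5⟩ := am_rank (fun v => 2 * w v + if v ∈ B then 0 else 1) W.card W rfl
  have h3' : ∀ u ∈ W, ∀ v ∈ W, r u < r v → w u ≤ w v := by
    intro u hu v hv h
    have := h3 u hu v hv h
    split_ifs at this <;> omega
  obtain ⟨j, hj1, hj2, hj3, hj4⟩ := am_hole W B hBW W.card (L + B.card * L + ∑ u ∈ B, r u + s) r
    (fun v => w v + L + r v) h1 h2 (by
      intro u hu v hv h
      rcases h.lt_or_eq with h | h
      · have := h3' u hu v hv h; omega
      · rw [h2 u hu v hv h])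
  set B0 := B.filter (fun v => ¬ w v ≠ 0) with hB0
  set B1 := B.filter (fun v => w v ≠ 0) with hB1
  have hBc : B1.card + B0.card = B.card := Finset.card_filter_add_card_filter_not _
  have hBs : ∑ v ∈ B1, r v + ∑ v ∈ B0, r v = ∑ v ∈ B, r v :=
    Finset.sum_filter_add_sum_filter_not _ _ _
  have hs0 : ∑ v ∈ B0, r v ≤ B0.card * B0.card := by
    refine Finset.sum_le_card_nsmul B0 r _ ?_
    intro v hv
    rw [hB0, Finset.mem_filter] at hv
    refine (h4 v (hBW hv.1)).trans (Finset.card_le_card ?_)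
    intro u hu
    rw [Finset.mem_filter] at hu
    have hw0 : w v = 0 := by have := hv.2; omega
    have := hu.2
    simp only [hv.1, hw0, if_true] at this
    rw [hB0, Finset.mem_filter]
    split_ifs at this with hb
    · exact ⟨hb, by omega⟩
    · omega
  have hs1 := am_sum_upper' W.card r B1 (fun v hv => h1 v (hBW (Finset.mem_filter.1 hv).1))
    (fun u hu v hv => h2 u (hBW (Finset.mem_filter.1 hu).1) v (hBW (Finset.mem_filter.1 hv).1))
  have hsB := am_sum_upper' W.card r B (fun v hv => h1 v (hBW hv))
    (fun u hu v hv => h2 u (hBW hu) v (hBW hv))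
  have hcB : ∑ u ∈ B, (if j ≤ r u then 1 else 0) ≤ B.card := by
    rw [← Finset.card_filter]; exact Finset.card_filter_le _ _
  have htot : ∑ u ∈ N, r u + ∑ u ∈ B, r u = ∑ u ∈ W, r u := by
    rw [← hWu, Finset.sum_union hd]
  have gsum : ∀ S : Finset α, ∑ u ∈ S, (L + r u + if j ≤ r u then 1 else 0) =
      S.card * L + ∑ u ∈ S, r u + ∑ u ∈ S, (if j ≤ r u then 1 else 0) := by
    intro S
    rw [Finset.sum_add_distrib, Finset.sum_add_distrib]; simp
  have hmain := am_arith W.card L B0.card B1.card k k' s (by omega) (by omega) hk' hq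
    (∑ u ∈ W, r u) (∑ u ∈ B0, r u) (∑ u ∈ B1, r u) (∑ u ∈ B, (if j ≤ r u then 1 else 0))
    (∑ u ∈ N, (if j ≤ r u then 1 else 0)) h5 hs0 hs1 (by omega) hs
  have e1 : B0.card + B1.card = B.card := by omega
  have e2 : W.card - B.card = N.card := by omega
  have e3 : ∑ u ∈ W, r u - ∑ u ∈ B, r u = ∑ u ∈ N, r u := by omega
  have e4 : ∑ v ∈ B0, r v + ∑ v ∈ B1, r v = ∑ v ∈ B, r v := by omega
  rw [e1, e4, e2, e3] at hmain
  refine ⟨fun v => L + r v + if j ≤ r v then 1 else 0, L + j, by omega, by omega, ?_, ?_, ?_, ?_, ?_, ?_⟩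
  · intro v hv
    have := h1 v hv
    dsimp only
    split_ifs <;> omega
  · intro u hu v hv h
    apply h2 u hu v hv
    dsimp only at h
    split_ifs at h <;> omega
  · intro u hu v hv h
    apply h2 u hu v hv
    dsimp only at h
    rcases lt_trichotomy (r u) (r v) with hl | hl | hl
    · have := h3' u hu v hv hl
      split_ifs at h <;> omega
    · exact hl
    · have := h3' v hv u hu hl
      split_ifs at h <;> omega
  · intro v hv
    rw [gsum]
    dsimp only
    have a1 := hj3 v hv
    have a2 := hj4 v hv
    split_ifs with h
    · have := a2 h; omega
    · have := a1 (by omega); omega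
  · intro v hv
    have hwv := hw v hv
    have hv1 := h1 v hv
    by_cases hvN : v ∈ N
    · rw [← Finset.add_sum_erase N _ hvN]
      have : (N.erase v).card * L ≤ ∑ u ∈ N.erase v, (L + r u + if j ≤ r u then 1 else 0) := by
        rw [gsum]; omega
      have hc := Finset.card_erase_add_one hvN
      rw [← hc] at hwv
      have : ((N.erase v).card + 1) * L = (N.erase v).card * L + L := by ring
      dsimp only
      omega
    · have hvB : v ∈ B := by
        rw [← hWu, Finset.mem_union] at hv; tauto
      have hb : 1 ≤ B.card := Finset.card_pos.2 ⟨v, hvB⟩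
      have hx : W.card + 1 ≤ ∑ u ∈ N, r u := by
        have : 2 * (W.card + 1) ≤ 2 * ∑ u ∈ N, r u := by
          have : 2 * ∑ u ∈ N, r u + 2 * ∑ u ∈ B, r u = W.card * (W.card + 1) := by omega
          rw [hWc] at this hsB ⊢
          obtain ⟨t, rfl⟩ : ∃ t, k = B.card + 1 + t := ⟨k - (B.card + 1), by omega⟩
          obtain ⟨b, hb'⟩ : ∃ b, B.card = b + 1 := ⟨B.card - 1, by omega⟩
          rw [hb'] at this hsB ⊢
          nlinarith
        omega
      rw [gsum]
      dsimp only
      split_ifs <;> omega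
  · rw [gsum, gsum]
    omega

/-- (Yilma 2013) If a graph `G` on `n` vertices has a vertex `x` of maximum degree
`d(x) = Δ(G) ≥ 2n/3` with a neighbor `y` such that `{x, y}` is a dominating clique
(every other vertex is adjacent to `x` or to `y`), then `G` is antimagic. -/
theorem antimagic_of_dominating_edge {V : Type*} [Fintype V] [DecidableEq V]
    (G : SimpleGraph V) [DecidableRel G.Adj] (x y : V)
    (hmax : G.degree x = G.maxDegree)
    (hdeg : 2 * Fintype.card V ≤ 3 * G.degree x)
    (hadj : G.Adj x y)
    (hdom : ∀ v : V, v ≠ x → v ≠ y → G.Adj v x ∨ G.Adj v y) :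
    IsAntimagic G := by
  classical
  have hxy : x ≠ y := hadj.ne
  set W : Finset V := (univ.erase x).erase y with hW
  have mW : ∀ v, v ∈ W ↔ v ≠ x ∧ v ≠ y := by intro v; simp [hW, and_comm]
  set N := W.filter (fun v => G.Adj x v) with hN
  set B := W.filter (fun v => ¬ G.Adj x v) with hB
  have mN : ∀ v, v ∈ N ↔ v ≠ y ∧ G.Adj x v := by
    intro v; rw [hN, Finset.mem_filter, mW]
    exact ⟨fun h => ⟨h.1.2, h.2⟩, fun h => ⟨⟨h.2.ne', h.1⟩, h.2⟩⟩
  have mB : ∀ v, v ∈ B ↔ v ≠ x ∧ v ≠ y ∧ ¬ G.Adj x v := by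
    intro v; rw [hB, Finset.mem_filter, mW]; tauto
  set Y := N.filter (fun v => G.Adj y v) with hY
  have mY : ∀ v, v ∈ Y ↔ (v ≠ y ∧ G.Adj x v) ∧ G.Adj y v := by
    intro v; rw [hY, Finset.mem_filter, mN]
  have hBy : ∀ v ∈ B, G.Adj y v := by
    intro v hv
    rw [mB] at hv
    rcases hdom v hv.1 hv.2.1 with h | h
    · exact absurd h.symm hv.2.2
    · exact h.symm
  have hNx : G.neighborFinset x = insert y N := by
    ext v
    rw [SimpleGraph.mem_neighborFinset, Finset.mem_insert, mN]
    constructor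
    · intro h
      by_cases e : v = y
      · exact Or.inl e
      · exact Or.inr ⟨e, h⟩
    · rintro (rfl | h)
      · exact hadj
      · exact h.2
  have hyN : y ∉ N := by rw [mN]; simp
  have hBY : Disjoint B Y := by
    rw [Finset.disjoint_left]
    intro v h h'
    rw [mB] at h; rw [mY] at h'
    exact h.2.2 h'.1.2
  have hNy : G.neighborFinset y = insert x (B ∪ Y) := by
    ext v
    rw [SimpleGraph.mem_neighborFinset, Finset.mem_insert, Finset.mem_union]
    constructor
    · intro h
      by_cases e : v = x
      · exact Or.inl e
      · right
        rw [mB, mY]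
        have := h.ne'
        tauto
    · rintro (rfl | h | h)
      · exact hadj.symm
      · exact hBy v h
      · exact ((mY v).1 h).2
  have hxBY : x ∉ B ∪ Y := by
    rw [Finset.mem_union, mB, mY]; simp
  have hdx : G.degree x = N.card + 1 := by
    rw [← SimpleGraph.card_neighborFinset_eq_degree, hNx, Finset.card_insert_of_notMem hyN]
  have hdy : G.degree y = B.card + Y.card + 1 := by
    rw [← SimpleGraph.card_neighborFinset_eq_degree, hNy, Finset.card_insert_of_notMem hxBY,
      Finset.card_union_of_disjoint hBY]
  have hle : ∀ v, G.degree v ≤ G.degree x := fun v => hmax ▸ G.degree_le_maxDegree v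
  have hWu : N ∪ B = W := Finset.filter_union_filter_not_eq _ _
  have hd : Disjoint N B := Finset.disjoint_filter_filter_not _ _ _
  have hWc : W.card + 2 = Fintype.card V := by
    have h1 := Finset.card_erase_add_one (Finset.mem_univ x)
    have h2 := Finset.card_erase_add_one (s := univ.erase x) (a := y) (by simp [hxy.symm])
    rw [Finset.card_univ] at h1
    rw [hW]; omega
  have hNB : N.card + B.card = W.card := by
    rw [← hWu, Finset.card_union_of_disjoint hd]
  have hdY := hle y
  set c : V → V := fun v => if G.Adj x v then x else y with hc
  have hcW : ∀ v, c v = x ∨ c v = y := by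
    intro v; simp only [hc]; split_ifs <;> simp
  have hcAdj : ∀ v ∈ W, G.Adj v (c v) := by
    intro v hv
    simp only [hc]
    split_ifs with h
    · exact h.symm
    · rw [mW] at hv
      rcases hdom v hv.1 hv.2 with h' | h'
      · exact absurd h'.symm h
      · exact h'
  have hcN : ∀ v ∈ N, c v = x := by
    intro v hv; simp only [hc]; rw [if_pos ((mN v).1 hv).2]
  have hcB : ∀ v ∈ B, c v = y := by
    intro v hv; simp only [hc]; rw [if_neg ((mB v).1 hv).2.2]
  set F : V → Sym2 V := fun v => s(v, c v) with hF
  have hFe : ∀ v ∈ W, ∀ u u', u ∈ W → s(u, u') = F v → u = v ∧ u' = c v := by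
    intro v hv u u' hu h
    rw [mW] at hu
    simp only [hF, Sym2.eq_iff] at h
    rcases h with h | h
    · exact h
    · rcases hcW v with e | e
      · exact absurd (h.1.trans e) hu.1
      · exact absurd (h.1.trans e) hu.2
  have hFinj : ∀ u ∈ W, ∀ v ∈ W, F u = F v → u = v := fun u hu v hv h => (hFe v hv u _ hu h).1
  have hFxy : ∀ v ∈ W, F v ≠ s(x, y) := by
    intro v hv h
    rw [mW] at hv
    simp only [hF, Sym2.eq_iff] at h
    tauto
  set T : Finset (Sym2 V) := insert s(x, y) (W.image F) with hT
  have hTc : T.card = W.card + 1 := by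
    rw [hT, Finset.card_insert_of_notMem, Finset.card_image_of_injOn]
    · exact fun u hu v hv h => hFinj u hu v hv h
    · rw [Finset.mem_image]
      rintro ⟨v, hv, h⟩
      exact hFxy v hv h
  have hTE : T ⊆ G.edgeFinset := by
    intro e he
    rw [hT, Finset.mem_insert, Finset.mem_image] at he
    rw [SimpleGraph.mem_edgeFinset]
    rcases he with rfl | ⟨v, hv, rfl⟩
    · exact hadj
    · exact hcAdj v hv
  set S := G.edgeFinset \ T with hS
  have hSc : G.edgeFinset.card = S.card + W.card + 1 := by
    have := Finset.card_sdiff_add_card_eq_card hTE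
    rw [hS]; omega
  have hxyS : s(x, y) ∉ S := by simp [hS, hT]
  have hFS : ∀ v ∈ W, F v ∉ S := by
    intro v hv h
    rw [hS, Finset.mem_sdiff] at h
    exact h.2 (Finset.mem_insert_of_mem (Finset.mem_image_of_mem F hv))
  have hSmem : ∀ v ∈ W, ∀ u, G.Adj v u → u ≠ c v → s(v, u) ∈ S := by
    intro v hv u hvu huc
    rw [hS, Finset.mem_sdiff, SimpleGraph.mem_edgeFinset, hT, Finset.mem_insert, Finset.mem_image]
    refine ⟨hvu, ?_⟩
    rintro (h | ⟨v', hv', h⟩)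
    · rw [mW] at hv
      simp only [Sym2.eq_iff] at h
      tauto
    · obtain ⟨rfl, h2⟩ := hFe v' hv' v u hv h.symm
      exact huc h2
  obtain ⟨h, hh1, hh2, -, hh4, -⟩ := am_rank (fun e : Sym2 V => if y ∈ e then 0 else 1) S.card S rfl
  set S1 := S.filter (fun e => y ∈ e) with hS1
  set S2 := S.filter (fun e => ¬ y ∈ e) with hS2
  have hS12 : S1.card + S2.card = S.card := Finset.card_filter_add_card_filter_not _
  have hYS : ∀ v ∈ Y, s(v, y) ∈ S := by
    intro v hv
    have hvN : v ∈ N := (Finset.mem_filter.1 hv).1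
    have hvW : v ∈ W := (Finset.mem_filter.1 hvN).1
    refine hSmem v hvW y ((mY v).1 hv).2.symm ?_
    rw [hcN v hvN]; exact hxy.symm
  have hS1e : S1 = Y.image (fun v => s(v, y)) := by
    ext e
    rw [hS1, Finset.mem_filter, Finset.mem_image]
    constructor
    · rintro ⟨he, hye⟩
      obtain ⟨v, rfl⟩ := hye
      have he' := he
      rw [hS, Finset.mem_sdiff, SimpleGraph.mem_edgeFinset, SimpleGraph.mem_edgeSet] at he'
      have hvx : v ≠ x := by
        rintro rfl; rw [Sym2.eq_swap] at he; exact hxyS he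
      have hvy : v ≠ y := he'.1.ne'
      have hvW : v ∈ W := (mW v).2 ⟨hvx, hvy⟩
      refine ⟨v, ?_, Sym2.eq_swap⟩
      rw [mY]
      refine ⟨⟨hvy, ?_⟩, he'.1⟩
      by_contra hn
      have : F v = s(y, v) := by
        simp only [hF]; rw [hcB v ((mB v).2 ⟨hvx, hvy, hn⟩), Sym2.eq_swap]
      exact hFS v hvW (this ▸ he)
    · rintro ⟨v, hv, rfl⟩
      exact ⟨hYS v hv, by simp⟩
  have hS1c : S1.card = Y.card := by
    rw [hS1e, Finset.card_image_of_injective]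
    intro u v huv
    simp only [Sym2.eq_iff] at huv
    rcases huv with e | e
    · exact e.1
    · exact e.1.trans e.2
  set w : V → ℕ := fun v => ∑ u ∈ (G.neighborFinset v).erase (c v), h s(v, u) with hw
  have hq : (B.filter (fun v => w v ≠ 0)).card ≤ 2 * S2.card := by
    have hsub : B.filter (fun v => w v ≠ 0) ⊆ S2.biUnion (fun e => e.toFinset) := by
      intro v hv
      rw [Finset.mem_filter] at hv
      obtain ⟨u, hu, -⟩ := Finset.exists_ne_zero_of_sum_ne_zero hv.2
      rw [Finset.mem_erase, SimpleGraph.mem_neighborFinset] at hu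
      have hvW : v ∈ W := (Finset.mem_filter.1 hv.1).1
      rw [Finset.mem_biUnion]
      refine ⟨s(v, u), ?_, by simp⟩
      rw [hS2, Finset.mem_filter]
      refine ⟨hSmem v hvW u hu.2 hu.1, ?_⟩
      rw [hcB v hv.1] at hu
      rw [Sym2.mem_iff]
      rintro (e | e)
      · exact ((mW v).1 hvW).2 e.symm
      · exact hu.1 e.symm
    refine (Finset.card_le_card hsub).trans ?_
    rw [mul_comm]
    apply Finset.card_biUnion_le_card_mul
    intro e _
    rw [Sym2.card_toFinset]
    split_ifs <;> omega
  have hww : ∀ v ∈ W, w v ≤ N.card * S.card := by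
    intro v hv
    have h1 : w v ≤ ((G.neighborFinset v).erase (c v)).card * S.card := by
      refine Finset.sum_le_card_nsmul _ _ _ ?_
      intro u hu
      rw [Finset.mem_erase, SimpleGraph.mem_neighborFinset] at hu
      exact (hh1 _ (hSmem v hv u hu.2 hu.1)).2
    refine h1.trans (Nat.mul_le_mul_right _ ?_)
    have h2 := Finset.card_erase_add_one (s := G.neighborFinset v) (a := c v)
      (by rw [SimpleGraph.mem_neighborFinset]; exact hcAdj v hv)
    rw [SimpleGraph.card_neighborFinset_eq_degree] at h2
    have := hle v
    omega
  have hs : ∑ v ∈ Y, h s(v, y) ≤ Y.card * Y.card := by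
    refine Finset.sum_le_card_nsmul _ _ _ ?_
    intro v hv
    refine (hh4 _ (hYS v hv)).trans ?_
    rw [← hS1c]
    apply Finset.card_le_card
    intro e he
    rw [Finset.mem_filter] at he
    rw [hS1, Finset.mem_filter]
    refine ⟨he.1, ?_⟩
    have := he.2
    by_contra hn
    simp [hn] at this
  obtain ⟨g, j, hj1, hj2, hg1, hg2, hg3, hg4, hg5, hg6⟩ := am_core W N B hWu hd w S.card
    (∑ v ∈ Y, h s(v, y)) (N.card - B.card) Y.card (by omega) (by omega) (by omega) hs
    (by omega) hww
  set f : Sym2 V → ℕ := fun e => if e ∈ S then h e else if e = s(x, y) then j else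
    ∑ v ∈ W.filter (fun v => F v = e), g v with hf
  have fS : ∀ e ∈ S, f e = h e := by
    intro e he; simp only [hf]; rw [if_pos he]
  have fxy : f s(x, y) = j := by
    simp only [hf]; rw [if_neg hxyS, if_pos trivial]
  have fF : ∀ v ∈ W, f (F v) = g v := by
    intro v hv
    simp only [hf]
    rw [if_neg (hFS v hv), if_neg (hFxy v hv)]
    have : W.filter (fun u => F u = F v) = {v} := by
      ext u
      rw [Finset.mem_filter, Finset.mem_singleton]
      exact ⟨fun hu => hFinj u hu.1 v hv hu.2, fun hu => by rw [hu]; exact ⟨hv, rfl⟩⟩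
    rw [this, Finset.sum_singleton]
  have hE : ∀ e ∈ G.edgeFinset, e ∈ S ∨ e = s(x, y) ∨ ∃ v ∈ W, e = F v := by
    intro e he
    by_cases heT : e ∈ T
    · rw [hT, Finset.mem_insert, Finset.mem_image] at heT
      rcases heT with e1 | ⟨v, hv, e1⟩
      · exact Or.inr (Or.inl e1)
      · exact Or.inr (Or.inr ⟨v, hv, e1.symm⟩)
    · left; rw [hS, Finset.mem_sdiff]; exact ⟨he, heT⟩
  have sW : ∀ v ∈ W, ∑ u ∈ G.neighborFinset v, f s(v, u) = w v + g v := by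
    intro v hv
    rw [← Finset.sum_erase_add _ _ (a := c v)
      (by rw [SimpleGraph.mem_neighborFinset]; exact hcAdj v hv)]
    congr 1
    · apply Finset.sum_congr rfl
      intro u hu
      rw [Finset.mem_erase, SimpleGraph.mem_neighborFinset] at hu
      exact fS _ (hSmem v hv u hu.2 hu.1)
    · exact fF v hv
  have sx : ∑ u ∈ G.neighborFinset x, f s(x, u) = j + ∑ u ∈ N, g u := by
    rw [hNx, Finset.sum_insert hyN, fxy]
    congr 1
    apply Finset.sum_congr rfl
    intro u hu
    rw [← fF u (Finset.mem_filter.1 hu).1]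
    simp only [hF]
    rw [hcN u hu, Sym2.eq_swap]
  have sy : ∑ u ∈ G.neighborFinset y, f s(y, u) = j + ∑ u ∈ B, g u + ∑ v ∈ Y, h s(v, y) := by
    rw [hNy, Finset.sum_insert hxBY, Finset.sum_union hBY, Sym2.eq_swap, fxy, add_assoc]
    congr 2
    · apply Finset.sum_congr rfl
      intro u hu
      rw [← fF u (Finset.mem_filter.1 hu).1]
      simp only [hF]
      rw [hcB u hu, Sym2.eq_swap]
    · apply Finset.sum_congr rfl
      intro u hu
      rw [Sym2.eq_swap, fS _ (hYS u hu)]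
  have hmaps : ∀ e ∈ G.edgeFinset, f e ∈ Finset.Icc 1 G.edgeFinset.card := by
    intro e he
    rw [Finset.mem_Icc, hSc]
    rcases hE e he with h' | rfl | ⟨v, hv, rfl⟩
    · rw [fS e h']; have := hh1 e h'; omega
    · rw [fxy]; omega
    · rw [fF v hv]; have := hg1 v hv; omega
  have hinj : Set.InjOn f (G.edgeFinset : Set (Sym2 V)) := by
    intro e he e' he' hee
    rw [Finset.mem_coe] at he he'
    rcases hE e he with h' | rfl | ⟨v, hv, rfl⟩ <;>
      rcases hE e' he' with h'' | rfl | ⟨v', hv', rfl⟩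
    · rw [fS e h', fS e' h''] at hee
      exact hh2 e h' e' h'' hee
    · rw [fS e h', fxy] at hee
      have := hh1 e h'; omega
    · rw [fS e h', fF v' hv'] at hee
      have := hh1 e h'; have := hg1 v' hv'; omega
    · rw [fS e' h'', fxy] at hee
      have := hh1 e' h''; omega
    · rfl
    · rw [fxy, fF v' hv'] at hee
      exact absurd hee.symm (hg1 v' hv').2.2
    · rw [fS e' h'', fF v hv] at hee
      have := hh1 e' h''; have := hg1 v hv; omega
    · rw [fxy, fF v hv] at hee
      exact absurd hee (hg1 v hv).2.2
    · rw [fF v hv, fF v' hv'] at hee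
      rw [hg2 v hv v' hv' hee]
  refine ⟨f, ⟨fun e he => hmaps e he, hinj, ?_⟩, ?_⟩
  · have : G.edgeFinset.image f = Finset.Icc 1 G.edgeFinset.card := by
      apply Finset.eq_of_subset_of_card_le
      · intro i hi
        obtain ⟨e, he, rfl⟩ := Finset.mem_image.1 hi
        exact hmaps e he
      · rw [Finset.card_image_of_injOn hinj]; simp
    rw [Set.SurjOn, ← this, Finset.coe_image]
  · intro u v huv
    dsimp only at huv
    have cases3 : ∀ v, v = x ∨ v = y ∨ v ∈ W := by
      intro v; rw [mW]; tauto
    rcases cases3 u with rfl | rfl | hu <;> rcases cases3 v with rfl | rfl | hv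
    · rfl
    · rw [sx, sy] at huv; omega
    · rw [sx, sW v hv] at huv; have := hg5 v hv; omega
    · rw [sx, sy] at huv; omega
    · rfl
    · rw [sy, sW v hv] at huv; exact absurd huv.symm (hg4 v hv)
    · rw [sx, sW u hu] at huv; have := hg5 u hu; omega
    · rw [sy, sW u hu] at huv; exact absurd huv (hg4 u hu)
    · rw [sW u hu, sW v hv] at huv; exact hg3 u hu v hv huv
end
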